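/- arXiv:math/0204206 — 6 statements merged into one kernel-verified Lean document; each statement's English description precedes it below -/
import Mathlib

section
/- Let γ be a non-resonant Gelfand–Zetlin array. Then for all 1 ≤ n ≤ N, 1 ≤ m ≤ N−1, and every function f of the Gelfand–Zetlin variables, the following identities hold pointwise at γ: (E_{nn}(E_{m,m+1}f) − E_{m,m+1}(E_{nn}f))(γ) = (δ_{nm} − δ_{n,m+1})·(E_{m,m+1}f)(γ); (E_{nn}(E_{m+1,m}f) − E_{m+1,m}(E_{nn}f))(γ) = −(δ_{nm} − δ_{n,m+1})·(E_{m+1,m}f)(γ); and, for all 1 ≤ n, m ≤ N−1, (E_{n,n+1}(E_{m+1,m}f) − E_{m+1,m}(E_{n,n+1}f))(γ) = δ_{nm}·((E_{nn} − E_{n+1,n+1})f)(γ). -/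
open Finset

noncomputable section

/-- A Gelfand–Zetlin array: complex values `γ n j`, relevant for `1 ≤ j ≤ n ≤ N`. -/
abbrev GZ := ℕ → ℕ → ℂ

/-- Shift of the single variable `γ n j` by `c`. -/
def gzShift (c : ℂ) (n j : ℕ) (γ : GZ) : GZ :=
  fun a b => if a = n ∧ b = j then γ a b + c else γ a b

/-- The diagonal Gelfand–Zetlin operator `E_{nn}`. -/
def Ediag (ℏ : ℝ) (n : ℕ) (f : GZ → ℂ) : GZ → ℂ := fun γ =>
  (1 / (Complex.I * ℏ)) * ((∑ j ∈ Icc 1 n, γ n j) - ∑ j ∈ Icc 1 (n - 1), γ (n - 1) j) * f γ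

/-- The raising Gelfand–Zetlin operator `E_{n,n+1}`. -/
def Eraise (ℏ : ℝ) (n : ℕ) (f : GZ → ℂ) : GZ → ℂ := fun γ =>
  -(1 / (Complex.I * ℏ)) * ∑ j ∈ Icc 1 n,
    ((∏ r ∈ Icc 1 (n + 1), (γ n j - γ (n + 1) r - Complex.I * ℏ / 2)) /
      ∏ s ∈ (Icc 1 n).erase j, (γ n j - γ n s)) * f (gzShift (-(Complex.I * ℏ)) n j γ)

/-- The lowering Gelfand–Zetlin operator `E_{n+1,n}`. -/
def Elower (ℏ : ℝ) (n : ℕ) (f : GZ → ℂ) : GZ → ℂ := fun γ =>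
  (1 / (Complex.I * ℏ)) * ∑ j ∈ Icc 1 n,
    ((∏ r ∈ Icc 1 (n - 1), (γ n j - γ (n - 1) r + Complex.I * ℏ / 2)) /
      ∏ s ∈ (Icc 1 n).erase j, (γ n j - γ n s)) * f (gzShift (Complex.I * ℏ) n j γ)

/-- Non-resonance: no two same-level entries differ by an integer multiple of `iℏ`. -/
def NonResonant (ℏ : ℝ) (N : ℕ) (γ : GZ) : Prop :=
  ∀ n ∈ Icc 1 (N - 1), ∀ j s : ℕ, 1 ≤ j → j < s → s ≤ n →
    ∀ m : ℤ, (γ n j - γ n s) / (Complex.I * ℏ) ≠ (m : ℂ)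

/-!
Each off-diagonal generator is a sum of one-variable shifts with rational coefficients, and shifts
commute. Hence the commutator of a raising and a lowering operator is a double sum over pairs of
shifts, in which the contributions of two different variables cancel: the shifted factors enter
both orders of composition symmetrically. What survives is a multiplication operator, which is
evaluated by Lagrange interpolation at the `2n` nodes `γ n j ± iℏ/2`: for a monic polynomial `P` of
degree `2n` and the nodal polynomial `Q`, the coefficient of degree `2n - 1` of `P - Q` is the sum
of the residues of `P / Q` at the nodes.
-/

section Interpolation

variable {F ι ι' κ κ' : Type*} [Field F] [DecidableEq ι] [DecidableEq ι']

open Polynomial in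
theorem sum_prod_sub_div_prod_erase_sub {s : Finset ι} {t : Finset κ} {x : ι → F} (y : κ → F)
    (hx : Set.InjOn x s) (hcard : #t = #s) :
    ∑ i ∈ s, (∏ k ∈ t, (x i - y k)) / ∏ j ∈ s.erase i, (x i - x j) =
      ∑ i ∈ s, x i - ∑ k ∈ t, y k := by
  obtain rfl | hs := s.eq_empty_or_nonempty
  · simp [card_eq_zero.mp hcard]
  set P : F[X] := ∏ k ∈ t, (X - C (y k)) with hP
  set Q : F[X] := ∏ i ∈ s, (X - C (x i)) with hQ
  have hPdeg : P.degree = #s := by simp [hP, degree_prod, hcard]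
  have hQdeg : Q.degree = #s := by simp [hQ, degree_prod]
  have hP_monic : P.Monic := monic_prod_X_sub_C _ _
  have hQ_monic : Q.Monic := monic_prod_X_sub_C _ _
  have hdeg : (P - Q).degree < #s :=
    hPdeg ▸ degree_sub_lt_left (hPdeg.trans hQdeg.symm) hP_monic.ne_zero
      (hP_monic.trans hQ_monic.symm)
  have heval : ∀ i ∈ s, (P - Q).eval (x i) = ∏ k ∈ t, (x i - y k) := fun i hi => by
    simp [hP, hQ, eval_prod, prod_eq_zero hi]
  have hcoeff : (P - Q).coeff (#s - 1) = ∑ i ∈ s, x i - ∑ k ∈ t, y k := by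
    rw [coeff_sub, hQ, prod_X_sub_C_coeff_card_pred _ _ hs.card_pos, hP, ← hcard,
      prod_X_sub_C_coeff_card_pred _ _ (hcard ▸ hs.card_pos)]
    ring
  rw [← hcoeff, Lagrange.coeff_eq_sum hx hdeg]
  exact sum_congr rfl fun i hi => by rw [heval i hi]

theorem disjSum_erase_inl (s : Finset ι) (s' : Finset ι') (i : ι) :
    (s.disjSum s').erase (Sum.inl i) = (s.erase i).disjSum s' := by
  ext (_ | _) <;> simp

theorem disjSum_erase_inr (s : Finset ι) (s' : Finset ι') (i : ι') :
    (s.disjSum s').erase (Sum.inr i) = s.disjSum (s'.erase i) := by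
  ext (_ | _) <;> simp

theorem sum_prod_sub_div_prod_erase_sub_disjSum {s : Finset ι} {s' : Finset ι'} {t : Finset κ}
    {t' : Finset κ'} {x : ι → F} {x' : ι' → F} (y : κ → F) (y' : κ' → F)
    (hx : Set.InjOn x s) (hx' : Set.InjOn x' s') (hne : ∀ i ∈ s, ∀ j ∈ s', x i ≠ x' j)
    (hcard : #t + #t' = #s + #s') :
    ∑ i ∈ s, ((∏ k ∈ t, (x i - y k)) * ∏ k ∈ t', (x i - y' k)) /
        ((∏ j ∈ s.erase i, (x i - x j)) * ∏ j ∈ s', (x i - x' j)) +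
      ∑ i ∈ s', ((∏ k ∈ t, (x' i - y k)) * ∏ k ∈ t', (x' i - y' k)) /
        ((∏ j ∈ s, (x' i - x j)) * ∏ j ∈ s'.erase i, (x' i - x' j)) =
    (∑ i ∈ s, x i + ∑ i ∈ s', x' i) - (∑ k ∈ t, y k + ∑ k ∈ t', y' k) := by
  have hinj : Set.InjOn (Sum.elim x x') (s.disjSum s') := by
    rintro (i | i) hi (j | j) hj hij <;>
      simp only [mem_coe, inl_mem_disjSum, inr_mem_disjSum, Sum.elim_inl, Sum.elim_inr]
        at hi hj hij
    · rw [hx hi hj hij]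
    · exact absurd hij (hne i hi j hj)
    · exact absurd hij.symm (hne j hj i hi)
    · rw [hx' hi hj hij]
  simpa only [sum_disjSum, prod_disjSum, disjSum_erase_inl, disjSum_erase_inr, Sum.elim_inl,
    Sum.elim_inr] using sum_prod_sub_div_prod_erase_sub (t := t.disjSum t') (Sum.elim y y') hinj
      (by rw [card_disjSum, card_disjSum, hcard])

end Interpolation

section Shift

variable (c d : ℂ) (γ : GZ) {n m j k : ℕ}

theorem gzShift_apply_self (n j : ℕ) : gzShift c n j γ n j = γ n j + c := by
  simp [gzShift]

theorem gzShift_apply_of_row_ne (j b : ℕ) (h : m ≠ n) : gzShift c n j γ m b = γ m b := by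
  simp [gzShift, h]

theorem gzShift_apply_of_col_ne (n a : ℕ) (h : k ≠ j) : gzShift c n j γ a k = γ a k := by
  simp [gzShift, h]

theorem gzShift_comm (n j m k : ℕ) :
    gzShift c n j (gzShift d m k γ) = gzShift d m k (gzShift c n j γ) := by
  funext a b
  simp only [gzShift]
  split_ifs <;> ring

theorem gzShift_gzShift_neg (n j : ℕ) : gzShift c n j (gzShift (-c) n j γ) = γ := by
  funext a b
  simp only [gzShift]
  split_ifs <;> ring

theorem prod_erase_comp_gzShift (s : Finset ℕ) (n j : ℕ) (g : ℂ → ℂ) :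
    ∏ b ∈ s.erase j, g (gzShift c n j γ n b) = ∏ b ∈ s.erase j, g (γ n b) :=
  prod_congr rfl fun _ hb => by rw [gzShift_apply_of_col_ne _ _ _ _ (ne_of_mem_erase hb)]

theorem prod_comp_gzShift {s : Finset ℕ} (hj : j ∈ s) (n : ℕ) (g : ℂ → ℂ) :
    ∏ b ∈ s, g (gzShift c n j γ n b) = g (γ n j + c) * ∏ b ∈ s.erase j, g (γ n b) := by
  rw [← mul_prod_erase _ _ hj, gzShift_apply_self, prod_erase_comp_gzShift]

theorem sum_gzShift {s : Finset ℕ} (hj : j ∈ s) (n : ℕ) :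
    ∑ b ∈ s, gzShift c n j γ n b = ∑ b ∈ s, γ n b + c := by
  rw [← add_sum_erase _ _ hj, ← add_sum_erase _ (γ n) hj, gzShift_apply_self,
    sum_congr rfl fun b hb => gzShift_apply_of_col_ne c γ n n (ne_of_mem_erase hb)]
  ring

end Shift

section ShiftOperator

/-- The difference operator `∑ⱼ aⱼ Tⱼ`, where `Tⱼ` shifts the variable `γ n j` by `c` and the
coefficients `aⱼ` act by multiplication. The operators `E_{n,n+1}` and `E_{n+1,n}` are scalar
multiples of operators of this form. -/
def gzShiftOp (c : ℂ) (n : ℕ) (a : ℕ → GZ → ℂ) : (GZ → ℂ) →ₗ[ℂ] (GZ → ℂ) where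
  toFun f γ := ∑ j ∈ Icc 1 n, a j γ * f (gzShift c n j γ)
  map_add' f g := by
    funext γ
    simp only [Pi.add_apply, mul_add, sum_add_distrib]
  map_smul' r f := by
    funext γ
    simp only [Pi.smul_apply, smul_eq_mul, RingHom.id_apply, mul_sum, mul_left_comm]

variable (c d : ℂ) (n m : ℕ) (a b : ℕ → GZ → ℂ) (f : GZ → ℂ) (γ : GZ)

theorem gzShiftOp_apply :
    gzShiftOp c n a f γ = ∑ j ∈ Icc 1 n, a j γ * f (gzShift c n j γ) := rfl

theorem gzShiftOp_commutator :
    gzShiftOp c n a (gzShiftOp d m b f) γ - gzShiftOp d m b (gzShiftOp c n a f) γ =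
      ∑ j ∈ Icc 1 n, ∑ k ∈ Icc 1 m,
        (a j γ * b k (gzShift c n j γ) - b k γ * a j (gzShift d m k γ)) *
          f (gzShift d m k (gzShift c n j γ)) := by
  simp only [gzShiftOp_apply, mul_sum]
  rw [sum_comm (s := Icc 1 m), ← sum_sub_distrib]
  refine sum_congr rfl fun j _ => ?_
  rw [← sum_sub_distrib]
  refine sum_congr rfl fun k _ => ?_
  rw [gzShift_comm c d]
  ring

end ShiftOperator

section Weight

/-- The function by which the diagonal operator `E_{nn}` multiplies. -/
def gzWeight (ℏ : ℝ) (n : ℕ) (γ : GZ) : ℂ :=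
  (1 / (Complex.I * ℏ)) * ((∑ j ∈ Icc 1 n, γ n j) - ∑ j ∈ Icc 1 (n - 1), γ (n - 1) j)

variable (ℏ : ℝ) (c : ℂ) (n m : ℕ) (γ : GZ)

theorem Ediag_apply (f : GZ → ℂ) : Ediag ℏ n f γ = gzWeight ℏ n γ * f γ := rfl

theorem gzWeight_gzShift {j : ℕ} (hj : j ∈ Icc 1 m) :
    gzWeight ℏ n (gzShift c m j γ) = gzWeight ℏ n γ + c / (Complex.I * ℏ) *
      ((if n = m then (1 : ℂ) else 0) - if n = m + 1 then (1 : ℂ) else 0) := by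
  have row_sum (a : ℕ) : ∑ b ∈ Icc 1 a, gzShift c m j γ a b =
      ∑ b ∈ Icc 1 a, γ a b + if a = m then c else 0 := by
    obtain rfl | h := eq_or_ne a m
    · rw [if_pos rfl, sum_gzShift c γ hj]
    · simp [gzShift_apply_of_row_ne c γ _ _ h, h]
  have pred_eq_iff : n - 1 = m ↔ n = m + 1 := by
    have := mem_Icc.mp hj
    omega
  simp only [gzWeight, row_sum, pred_eq_iff]
  split_ifs <;> ring

theorem Ediag_gzShiftOp_commutator (a : ℕ → GZ → ℂ) (f : GZ → ℂ) :
    Ediag ℏ n (gzShiftOp c m a f) γ - gzShiftOp c m a (Ediag ℏ n f) γ =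
      -(c / (Complex.I * ℏ)) *
        ((if n = m then (1 : ℂ) else 0) - if n = m + 1 then (1 : ℂ) else 0) *
          gzShiftOp c m a f γ := by
  simp only [Ediag_apply, gzShiftOp_apply, mul_sum]
  rw [← sum_sub_distrib]
  refine sum_congr rfl fun j hj => ?_
  rw [gzWeight_gzShift ℏ c n m γ hj]
  ring

end Weight

section Coefficients

/-- The coefficient of the shift of `γ n j` in `E_{n,n+1}`, without the prefactor `-1/(iℏ)`;
`c` stands for `iℏ`. -/
def raiseCoeff (c : ℂ) (n j : ℕ) (γ : GZ) : ℂ :=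
  (∏ r ∈ Icc 1 (n + 1), (γ n j - γ (n + 1) r - c / 2)) / ∏ s ∈ (Icc 1 n).erase j, (γ n j - γ n s)

/-- The coefficient of the shift of `γ n j` in `E_{n+1,n}`, without the prefactor `1/(iℏ)`;
`c` stands for `iℏ`. -/
def lowerCoeff (c : ℂ) (n j : ℕ) (γ : GZ) : ℂ :=
  (∏ r ∈ Icc 1 (n - 1), (γ n j - γ (n - 1) r + c / 2)) / ∏ s ∈ (Icc 1 n).erase j, (γ n j - γ n s)

theorem Eraise_eq_smul_gzShiftOp (ℏ : ℝ) (n : ℕ) (f : GZ → ℂ) :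
    Eraise ℏ n f = -(1 / (Complex.I * ℏ)) •
      gzShiftOp (-(Complex.I * ℏ)) n (raiseCoeff (Complex.I * ℏ) n) f := rfl

theorem Elower_eq_smul_gzShiftOp (ℏ : ℝ) (n : ℕ) (f : GZ → ℂ) :
    Elower ℏ n f = (1 / (Complex.I * ℏ)) •
      gzShiftOp (Complex.I * ℏ) n (lowerCoeff (Complex.I * ℏ) n) f := rfl

variable (c : ℂ) (γ : GZ) {n m j k : ℕ}

theorem raiseCoeff_lowerCoeff_exchange_of_col_ne (hj : j ∈ Icc 1 n) (hk : k ∈ Icc 1 n)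
    (hjk : j ≠ k) :
    raiseCoeff c n j γ * lowerCoeff c n k (gzShift (-c) n j γ) =
      lowerCoeff c n k γ * raiseCoeff c n j (gzShift c n k γ) := by
  have hpred : n - 1 ≠ n := by
    have := mem_Icc.mp hj
    omega
  simp only [raiseCoeff, lowerCoeff, gzShift_apply_of_row_ne _ _ _ _ hpred,
    gzShift_apply_of_row_ne _ _ _ _ n.succ_ne_self, gzShift_apply_of_col_ne _ _ _ _ hjk,
    gzShift_apply_of_col_ne _ _ _ _ hjk.symm]
  have hk' : k ∈ (Icc 1 n).erase j := mem_erase.mpr ⟨hjk.symm, hk⟩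
  have hj' : j ∈ (Icc 1 n).erase k := mem_erase.mpr ⟨hjk, hj⟩
  rw [prod_comp_gzShift (-c) γ hj' n (γ n k - ·), prod_comp_gzShift c γ hk' n (γ n j - ·),
    ← mul_prod_erase _ _ hk', ← mul_prod_erase _ _ hj', div_mul_div_comm, div_mul_div_comm]
  -- With `u = γ n j - γ n k`, the factors pairing `j` and `k` give `u * (c - u)` on the left and
  -- `(-u) * (u - c)` on the right.
  congr 1 <;> ring

theorem raiseCoeff_lowerCoeff_exchange_succ (hj : j ∈ Icc 1 n) (hk : k ∈ Icc 1 (n + 1)) :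
    raiseCoeff c n j γ * lowerCoeff c (n + 1) k (gzShift (-c) n j γ) =
      lowerCoeff c (n + 1) k γ * raiseCoeff c n j (gzShift c (n + 1) k γ) := by
  simp only [raiseCoeff, lowerCoeff, gzShift_apply_of_row_ne _ _ _ _ n.succ_ne_self,
    gzShift_apply_of_row_ne _ _ _ _ n.succ_ne_self.symm, Nat.add_sub_cancel]
  rw [prod_comp_gzShift (-c) γ hj n (γ (n + 1) k - · + c / 2),
    prod_comp_gzShift c γ hk (n + 1) (γ n j - · - c / 2), ← mul_prod_erase (Icc 1 n) _ hj,
    ← mul_prod_erase (Icc 1 (n + 1)) _ hk, div_mul_div_comm, div_mul_div_comm]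
  congr 1 <;> ring

theorem raiseCoeff_lowerCoeff_exchange (hj : j ∈ Icc 1 n) (hk : k ∈ Icc 1 m)
    (hne : n = m → j ≠ k) :
    raiseCoeff c n j γ * lowerCoeff c m k (gzShift (-c) n j γ) =
      lowerCoeff c m k γ * raiseCoeff c n j (gzShift c m k γ) := by
  obtain rfl | hnm := eq_or_ne n m
  · exact raiseCoeff_lowerCoeff_exchange_of_col_ne c γ hj hk (hne rfl)
  obtain rfl | hsucc := eq_or_ne (n + 1) m
  · exact raiseCoeff_lowerCoeff_exchange_succ c γ hj hk
  have hpred : m - 1 ≠ n := by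
    have := mem_Icc.mp hk
    omega
  simp only [raiseCoeff, lowerCoeff, gzShift_apply_of_row_ne _ _ _ _ hnm,
    gzShift_apply_of_row_ne _ _ _ _ hnm.symm, gzShift_apply_of_row_ne _ _ _ _ hsucc,
    gzShift_apply_of_row_ne _ _ _ _ hpred]
  ring

variable {c}

theorem raiseCoeff_mul_lowerCoeff_gzShift (hc : c ≠ 0) (hj : j ∈ Icc 1 n) :
    raiseCoeff c n j γ * lowerCoeff c n j (gzShift (-c) n j γ) =
      -c * (((∏ r ∈ Icc 1 (n + 1), (γ n j - c / 2 - γ (n + 1) r)) *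
          ∏ r ∈ Icc 1 (n - 1), (γ n j - c / 2 - γ (n - 1) r)) /
        ((∏ s ∈ (Icc 1 n).erase j, (γ n j - c / 2 - (γ n s - c / 2))) *
          ∏ s ∈ Icc 1 n, (γ n j - c / 2 - (γ n s + c / 2)))) := by
  have hpred : n - 1 ≠ n := by
    have := mem_Icc.mp hj
    omega
  have hnode (z : ℂ) : γ n j - c / 2 - (z + c / 2) = γ n j + -c - z := by ring
  have hlower (z : ℂ) : γ n j + -c - z + c / 2 = γ n j - c / 2 - z := by ring
  simp only [raiseCoeff, lowerCoeff, gzShift_apply_of_row_ne _ _ _ _ hpred, gzShift_apply_self,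
    hnode, hlower, sub_sub_sub_cancel_right, sub_right_comm (γ n j) _ (c / 2)]
  rw [prod_erase_comp_gzShift (-c) γ _ n j (γ n j + -c - ·),
    ← mul_prod_erase (Icc 1 n) (fun s => γ n j + -c - γ n s) hj, add_sub_cancel_left]
  field_simp

theorem lowerCoeff_mul_raiseCoeff_gzShift (hc : c ≠ 0) (hj : j ∈ Icc 1 n) :
    lowerCoeff c n j γ * raiseCoeff c n j (gzShift c n j γ) =
      c * (((∏ r ∈ Icc 1 (n + 1), (γ n j + c / 2 - γ (n + 1) r)) *
          ∏ r ∈ Icc 1 (n - 1), (γ n j + c / 2 - γ (n - 1) r)) /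
        ((∏ s ∈ Icc 1 n, (γ n j + c / 2 - (γ n s - c / 2))) *
          ∏ s ∈ (Icc 1 n).erase j, (γ n j + c / 2 - (γ n s + c / 2)))) := by
  have hnode (z : ℂ) : γ n j + c / 2 - (z - c / 2) = γ n j + c - z := by ring
  have hraise (z : ℂ) : γ n j + c - z - c / 2 = γ n j + c / 2 - z := by ring
  simp only [raiseCoeff, lowerCoeff, gzShift_apply_self,
    gzShift_apply_of_row_ne _ _ _ _ n.succ_ne_self, hnode, hraise, add_sub_add_right_eq_sub,
    sub_add_eq_add_sub]
  rw [prod_erase_comp_gzShift c γ _ n j (γ n j + c - ·),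
    ← mul_prod_erase (Icc 1 n) (fun s => γ n j + c - γ n s) hj, add_sub_cancel_left]
  field_simp

theorem sum_raiseCoeff_lowerCoeff_commutator (hn : 1 ≤ n) (hinj : Set.InjOn (γ n) (Icc 1 n))
    (hne : ∀ j ∈ Icc 1 n, ∀ s ∈ Icc 1 n, γ n j - γ n s ≠ c) :
    ∑ j ∈ Icc 1 n, (raiseCoeff c n j γ * lowerCoeff c n j (gzShift (-c) n j γ) -
        lowerCoeff c n j γ * raiseCoeff c n j (gzShift c n j γ)) =
      -c * (2 * ∑ j ∈ Icc 1 n, γ n j - ∑ j ∈ Icc 1 (n + 1), γ (n + 1) j -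
        ∑ j ∈ Icc 1 (n - 1), γ (n - 1) j) := by
  have hc : c ≠ 0 := by
    have h1 : 1 ∈ Icc 1 n := left_mem_Icc.mpr hn
    simpa using (hne 1 h1 1 h1).symm
  have interpolation := sum_prod_sub_div_prod_erase_sub_disjSum (s := Icc 1 n) (s' := Icc 1 n)
    (t := Icc 1 (n + 1)) (t' := Icc 1 (n - 1)) (x := (γ n · - c / 2)) (x' := (γ n · + c / 2))
    (γ (n + 1)) (γ (n - 1)) (fun i hi j hj h => hinj hi hj (sub_left_injective h))
    (fun i hi j hj h => hinj hi hj (add_left_injective _ h))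
    (fun i hi j hj h => hne i hi j hj (by linear_combination h))
    (by simp only [Nat.card_Icc]; omega)
  have sum_nodes : ∑ j ∈ Icc 1 n, (γ n j - c / 2) + ∑ j ∈ Icc 1 n, (γ n j + c / 2) =
      2 * ∑ j ∈ Icc 1 n, γ n j := by
    rw [sum_sub_distrib, sum_add_distrib]
    ring
  rw [sum_nodes] at interpolation
  rw [sum_sub_distrib, sum_congr rfl fun j hj => raiseCoeff_mul_lowerCoeff_gzShift γ hc hj,
    sum_congr rfl fun j hj => lowerCoeff_mul_raiseCoeff_gzShift γ hc hj, ← mul_sum, ← mul_sum]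
  linear_combination -c * interpolation

end Coefficients

section Commutators

variable {ℏ : ℝ} (n m : ℕ) (f : GZ → ℂ) (γ : GZ)

theorem I_mul_ofReal_ne_zero (hℏ : ℏ ≠ 0) : Complex.I * (ℏ : ℂ) ≠ 0 :=
  mul_ne_zero Complex.I_ne_zero (Complex.ofReal_ne_zero.mpr hℏ)

theorem Ediag_smul (r : ℂ) : Ediag ℏ n (r • f) γ = r * Ediag ℏ n f γ := by
  simp only [Ediag_apply, Pi.smul_apply, smul_eq_mul]
  ring

theorem Ediag_Eraise_commutator (hℏ : ℏ ≠ 0) :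
    Ediag ℏ n (Eraise ℏ m f) γ - Eraise ℏ m (Ediag ℏ n f) γ =
      ((if n = m then (1 : ℂ) else 0) - if n = m + 1 then (1 : ℂ) else 0) *
        Eraise ℏ m f γ := by
  have hshift := Ediag_gzShiftOp_commutator ℏ (-(Complex.I * ℏ)) n m γ
    (raiseCoeff (Complex.I * ℏ) m) f
  rw [neg_div, neg_neg, div_self (I_mul_ofReal_ne_zero hℏ), one_mul] at hshift
  simp only [Eraise_eq_smul_gzShiftOp, Ediag_smul, Pi.smul_apply, smul_eq_mul]
  linear_combination -(1 / (Complex.I * ℏ)) * hshift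

theorem Ediag_Elower_commutator (hℏ : ℏ ≠ 0) :
    Ediag ℏ n (Elower ℏ m f) γ - Elower ℏ m (Ediag ℏ n f) γ =
      -((if n = m then (1 : ℂ) else 0) - if n = m + 1 then (1 : ℂ) else 0) *
        Elower ℏ m f γ := by
  have hshift := Ediag_gzShiftOp_commutator ℏ (Complex.I * ℏ) n m γ
    (lowerCoeff (Complex.I * ℏ) m) f
  rw [div_self (I_mul_ofReal_ne_zero hℏ), neg_one_mul] at hshift
  simp only [Elower_eq_smul_gzShiftOp, Ediag_smul, Pi.smul_apply, smul_eq_mul]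
  linear_combination (1 / (Complex.I * ℏ)) * hshift

variable (ℏ) in
theorem Eraise_Elower_commutator_eq_sum :
    Eraise ℏ n (Elower ℏ m f) γ - Elower ℏ m (Eraise ℏ n f) γ =
      -(1 / (Complex.I * ℏ)) ^ 2 * ∑ j ∈ Icc 1 n, ∑ k ∈ Icc 1 m,
        (raiseCoeff (Complex.I * ℏ) n j γ *
            lowerCoeff (Complex.I * ℏ) m k (gzShift (-(Complex.I * ℏ)) n j γ) -
          lowerCoeff (Complex.I * ℏ) m k γ *
            raiseCoeff (Complex.I * ℏ) n j (gzShift (Complex.I * ℏ) m k γ)) *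
          f (gzShift (Complex.I * ℏ) m k (gzShift (-(Complex.I * ℏ)) n j γ)) := by
  rw [← gzShiftOp_commutator]
  simp only [Eraise_eq_smul_gzShiftOp, Elower_eq_smul_gzShiftOp, map_smul, Pi.smul_apply,
    smul_eq_mul]
  ring

variable {n m} in
theorem Eraise_Elower_commutator_of_ne (hnm : n ≠ m) :
    Eraise ℏ n (Elower ℏ m f) γ - Elower ℏ m (Eraise ℏ n f) γ = 0 := by
  rw [Eraise_Elower_commutator_eq_sum]
  refine mul_eq_zero_of_right _ (sum_eq_zero fun j hj => sum_eq_zero fun k hk => ?_)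
  rw [raiseCoeff_lowerCoeff_exchange _ γ hj hk (absurd · hnm), sub_self, zero_mul]

variable {n γ} in
theorem Eraise_Elower_commutator_self (hn : 1 ≤ n) (hinj : Set.InjOn (γ n) (Icc 1 n))
    (hne : ∀ j ∈ Icc 1 n, ∀ s ∈ Icc 1 n, γ n j - γ n s ≠ Complex.I * ℏ) :
    Eraise ℏ n (Elower ℏ n f) γ - Elower ℏ n (Eraise ℏ n f) γ =
      Ediag ℏ n f γ - Ediag ℏ (n + 1) f γ := by
  have hc : Complex.I * (ℏ : ℂ) ≠ 0 := by
    have h1 : 1 ∈ Icc 1 n := left_mem_Icc.mpr hn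
    simpa using (hne 1 h1 1 h1).symm
  have hsum := sum_raiseCoeff_lowerCoeff_commutator γ hn hinj hne
  rw [Eraise_Elower_commutator_eq_sum, Ediag_apply, Ediag_apply, gzWeight, gzWeight,
    Nat.add_sub_cancel]
  generalize Complex.I * (ℏ : ℂ) = c at hc hsum ⊢
  have diagonal_term (j : ℕ) (hj : j ∈ Icc 1 n) :
      ∑ k ∈ Icc 1 n, (raiseCoeff c n j γ * lowerCoeff c n k (gzShift (-c) n j γ) -
        lowerCoeff c n k γ * raiseCoeff c n j (gzShift c n k γ)) *
          f (gzShift c n k (gzShift (-c) n j γ)) =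
      (raiseCoeff c n j γ * lowerCoeff c n j (gzShift (-c) n j γ) -
        lowerCoeff c n j γ * raiseCoeff c n j (gzShift c n j γ)) * f γ := by
    rw [sum_eq_single_of_mem j hj, gzShift_gzShift_neg]
    intro k hk hkj
    rw [raiseCoeff_lowerCoeff_exchange c γ hj hk fun _ => hkj.symm, sub_self, zero_mul]
  rw [sum_congr rfl diagonal_term, ← sum_mul, hsum]
  field_simp
  ring

end Commutators

theorem NonResonant.eq_of_sub_eq_int_mul {ℏ : ℝ} {N n j s : ℕ} {γ : GZ} (hγ : NonResonant ℏ N γ)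
    (hℏ : ℏ ≠ 0) (hn : n ∈ Icc 1 (N - 1)) (hj : j ∈ Icc 1 n) (hs : s ∈ Icc 1 n) (k : ℤ)
    (h : γ n j - γ n s = k * (Complex.I * ℏ)) : j = s := by
  have hc := I_mul_ofReal_ne_zero hℏ
  rw [mem_Icc] at hj hs
  obtain hlt | heq | hgt := lt_trichotomy j s
  · exact absurd ((div_eq_iff hc).mpr h) (hγ n hn j s hj.1 hlt hs.2 k)
  · exact heq
  · refine absurd ((div_eq_iff hc).mpr ?_) (hγ n hn s j hs.1 hgt hj.2 (-k))
    push_cast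
    linear_combination -h

theorem NonResonant.injOn {ℏ : ℝ} {N n : ℕ} {γ : GZ} (hγ : NonResonant ℏ N γ) (hℏ : ℏ ≠ 0)
    (hn : n ∈ Icc 1 (N - 1)) : Set.InjOn (γ n) (Icc 1 n) := fun j hj s hs h =>
  hγ.eq_of_sub_eq_int_mul hℏ hn hj hs 0 (by simp [h])

theorem NonResonant.sub_ne {ℏ : ℝ} {N n j s : ℕ} {γ : GZ} (hγ : NonResonant ℏ N γ) (hℏ : ℏ ≠ 0)
    (hn : n ∈ Icc 1 (N - 1)) (hj : j ∈ Icc 1 n) (hs : s ∈ Icc 1 n) :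
    γ n j - γ n s ≠ Complex.I * ℏ := by
  intro h
  obtain rfl := hγ.eq_of_sub_eq_int_mul hℏ hn hj hs 1 (by simp [h])
  exact I_mul_ofReal_ne_zero hℏ (by rw [← h, sub_self])

/-- the Gelfand–Zetlin operators satisfy the `gl(N)` commutation
relations pointwise at every non-resonant array. -/
theorem gz_commutation_relations (ℏ : ℝ) (hℏ : 0 < ℏ) (N : ℕ) (hN : 2 ≤ N)
    (γ : GZ) (hγ : NonResonant ℏ N γ) (f : GZ → ℂ) :
    (∀ n m : ℕ, 1 ≤ n → n ≤ N → 1 ≤ m → m ≤ N - 1 →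
      Ediag ℏ n (Eraise ℏ m f) γ - Eraise ℏ m (Ediag ℏ n f) γ =
        ((if n = m then (1 : ℂ) else 0) - if n = m + 1 then (1 : ℂ) else 0) *
          Eraise ℏ m f γ) ∧
    (∀ n m : ℕ, 1 ≤ n → n ≤ N → 1 ≤ m → m ≤ N - 1 →
      Ediag ℏ n (Elower ℏ m f) γ - Elower ℏ m (Ediag ℏ n f) γ =
        -((if n = m then (1 : ℂ) else 0) - if n = m + 1 then (1 : ℂ) else 0) *
          Elower ℏ m f γ) ∧
    (∀ n m : ℕ, 1 ≤ n → n ≤ N - 1 → 1 ≤ m → m ≤ N - 1 →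
      Eraise ℏ n (Elower ℏ m f) γ - Elower ℏ m (Eraise ℏ n f) γ =
        (if n = m then (1 : ℂ) else 0) * (Ediag ℏ n f γ - Ediag ℏ (n + 1) f γ)) := by
  refine ⟨fun n m _ _ _ _ => Ediag_Eraise_commutator n m f γ hℏ.ne',
    fun n m _ _ _ _ => Ediag_Elower_commutator n m f γ hℏ.ne', fun n m hn hnN _ _ => ?_⟩
  have hrow : n ∈ Icc 1 (N - 1) := mem_Icc.mpr ⟨hn, hnN⟩
  obtain rfl | hnm := eq_or_ne n m
  · rw [if_pos rfl, one_mul]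
    exact Eraise_Elower_commutator_self f hn (hγ.injOn hℏ.ne' hrow)
      fun j hj s hs => hγ.sub_ne hℏ.ne' hrow hj hs
  · rw [if_neg hnm, zero_mul]
    exact Eraise_Elower_commutator_of_ne f γ hnm
end
end

section
/- Let n ≥ 1, let x_1,…,x_n be pairwise distinct complex numbers, and let m ≥ 0 be an integer. Then Σ_{j=1}^{n} x_j^m / ∏_{s≠j}(x_j − x_s) = Σ x_1^{k_1}⋯x_n^{k_n}, where the sum on the right is over all tuples (k_1,…,k_n) of non-negative integers with k_1 + ⋯ + k_n = m − n + 1 (so in particular the right-hand side equals 0 when m < n − 1, and equals 1 when m = n − 1). -/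
open Finset

/-!
Let `w j = ∏_{s ≠ j} (x j - x s)⁻¹`. Interpolating the constant `1` at the `n` nodes `x j` gives
`∑ j, w j ∏_{s ≠ j} (X - x s) = 1`. Reversing the coefficients turns this into
`∑ j, w j ∏_{s ≠ j} (1 - x s X) = X ^ (n - 1)`, and dividing by `∏ s, (1 - x s X)` gives the
partial fraction decomposition `∑ j, w j / (1 - x j X) = X ^ (n - 1) / ∏ s, (1 - x s X)`.
Now compare the coefficients of `X ^ m` in the geometric series expansions.
-/

section NodalIdentities

open Polynomial Lagrange

variable {ι : Type*}

lemma reflect_sum {R : Type*} [Semiring R] (N : ℕ) (s : Finset ι) (f : ι → R[X]) :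
    reflect N (∑ i ∈ s, f i) = ∑ i ∈ s, reflect N (f i) :=
  map_sum (⟨⟨reflect N, reflect_zero⟩, fun p q => reflect_add p q N⟩ : R[X] →+ R[X]) f s

lemma natDegree_nodal_le {R : Type*} [CommRing R] (s : Finset ι) (v : ι → R) :
    (nodal s v).natDegree ≤ #s := by
  calc
    (nodal s v).natDegree = (∏ i ∈ s, (X - C (v i))).natDegree := by rw [nodal_eq]
    _ ≤ ∑ i ∈ s, (X - C (v i)).natDegree := natDegree_prod_le s _
    _ ≤ #s := by simpa using sum_le_card_nsmul s _ 1 fun i _ => natDegree_X_sub_C_le (v i)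

lemma reflect_card_nodal {R : Type*} [CommRing R] (s : Finset ι) (v : ι → R) :
    (nodal s v).reflect #s = ∏ i ∈ s, (1 - C (v i) * X) := by
  induction s using Finset.cons_induction with
  | empty => simp
  | cons a s ha ih =>
    rw [nodal_eq, prod_cons, ← nodal_eq, card_cons, add_comm,
      reflect_mul _ _ (natDegree_X_sub_C_le _) (natDegree_nodal_le s v), ih, prod_cons,
      reflect_sub, reflect_one_X, reflect_C, pow_one]

variable {F : Type*} [Field F] [DecidableEq ι] {s : Finset ι} {v : ι → F}

lemma sum_nodalWeight_mul_nodal_erase (hv : Set.InjOn v s) (hs : s.Nonempty) :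
    ∑ j ∈ s, C (nodalWeight s v j) * nodal (s.erase j) v = 1 := by
  rw [← sum_basis hv hs]
  refine sum_congr rfl fun j hj => ?_
  rw [basis_eq_prod_sub_inv_mul_nodal_div hj, nodal_erase_eq_nodal_div hj]

lemma sum_nodalWeight_mul_prod_erase_one_sub (hv : Set.InjOn v s) (hs : s.Nonempty) :
    ∑ j ∈ s, C (nodalWeight s v j) * ∏ i ∈ s.erase j, (1 - C (v i) * X) = X ^ (#s - 1) := by
  calc
    _ = ∑ j ∈ s, reflect (#s - 1) (C (nodalWeight s v j) * nodal (s.erase j) v) :=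
      sum_congr rfl fun j hj => by
        rw [reflect_C_mul, ← card_erase_of_mem hj, reflect_card_nodal]
    _ = X ^ (#s - 1) := by
      rw [← reflect_sum, sum_nodalWeight_mul_nodal_erase hv hs, reflect_one]

end NodalIdentities

section GeneratingFunctions

open PowerSeries Lagrange

variable {ι : Type*} [DecidableEq ι]

/-- The geometric series `∑ k, a ^ k X ^ k`, i.e. the inverse of `1 - a X` in `R⟦X⟧`. It is defined
by its coefficients so that it makes sense over a semiring. -/
def geomSeries {R : Type*} [Semiring R] (a : R) : R⟦X⟧ := PowerSeries.mk fun k => a ^ k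

lemma coeff_geomSeries {R : Type*} [Semiring R] (a : R) (k : ℕ) :
    coeff k (geomSeries a) = a ^ k :=
  coeff_mk k _

lemma one_sub_C_mul_X_mul_geomSeries {R : Type*} [CommRing R] (a : R) :
    (1 - C a * X) * geomSeries a = 1 := by
  ext (_ | k)
  · simp [geomSeries]
  · simp [coeff_geomSeries, sub_mul, mul_assoc, coeff_succ_X_mul, pow_succ']

lemma prod_erase_one_sub_mul_prod_geomSeries {R : Type*} [CommRing R] {s : Finset ι} (v : ι → R)
    {j : ι} (hj : j ∈ s) :
    (∏ i ∈ s.erase j, (1 - C (v i) * X)) * ∏ i ∈ s, geomSeries (v i) = geomSeries (v j) := by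
  rw [← prod_erase_mul s _ hj, ← mul_assoc, ← prod_mul_distrib]
  simp only [one_sub_C_mul_X_mul_geomSeries, prod_const_one, one_mul]

lemma coeff_prod_geomSeries {R : Type*} [CommSemiring R] (s : Finset ι) (v : ι → R) (d : ℕ) :
    coeff d (∏ i ∈ s, geomSeries (v i)) = ∑ k ∈ s.piAntidiag d, ∏ i ∈ s, v i ^ k i := by
  simp only [coeff_prod, coeff_geomSeries, finsuppAntidiag, sum_map]
  exact sum_attach (s.piAntidiag d) fun k => ∏ i ∈ s, v i ^ k i

variable {F : Type*} [Field F] {s : Finset ι} {v : ι → F}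

lemma sum_nodalWeight_mul_geomSeries (hv : Set.InjOn v s) (hs : s.Nonempty) :
    ∑ j ∈ s, C (nodalWeight s v j) * geomSeries (v j) =
      X ^ (#s - 1) * ∏ i ∈ s, geomSeries (v i) := by
  have reversed_identity : ∑ j ∈ s, C (nodalWeight s v j) * ∏ i ∈ s.erase j, (1 - C (v i) * X) =
      (X : F⟦X⟧) ^ (#s - 1) := by
    have coe_identity := congrArg (Polynomial.coeToPowerSeries.ringHom (R := F))
      (sum_nodalWeight_mul_prod_erase_one_sub hv hs)
    simp only [map_sum, map_mul, map_prod, map_sub, map_one, map_pow] at coe_identity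
    simpa using coe_identity
  rw [← reversed_identity, sum_mul]
  refine sum_congr rfl fun j hj => ?_
  rw [mul_assoc, prod_erase_one_sub_mul_prod_geomSeries v hj]

lemma sum_pow_div_prod_sub_eq_ite (hv : Set.InjOn v s) (hs : s.Nonempty) (m : ℕ) :
    ∑ j ∈ s, v j ^ m / ∏ i ∈ s.erase j, (v j - v i) =
      if #s - 1 ≤ m then ∑ k ∈ s.piAntidiag (m - (#s - 1)), ∏ i ∈ s, v i ^ k i else 0 := by
  calc
    _ = coeff m (∑ j ∈ s, C (nodalWeight s v j) * geomSeries (v j)) := by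
      simp [coeff_geomSeries, nodalWeight, div_eq_inv_mul]
    _ = _ := by
      rw [sum_nodalWeight_mul_geomSeries hv hs, coeff_X_pow_mul', coeff_prod_geomSeries]

end GeneratingFunctions

lemma filter_sum_add_eq_piAntidiag {ι : Type*} [Fintype ι] [DecidableEq ι] {c d N : ℕ}
    (h : d + c = N) :
    {k ∈ Fintype.piFinset fun _ : ι => range (N + 1) | ∑ i, k i + c = N} = univ.piAntidiag d := by
  ext k
  have apply_le_sum (i : ι) : k i ≤ ∑ i, k i := single_le_sum_of_canonicallyOrdered (mem_univ i)
  simp only [mem_filter, Fintype.mem_piFinset, mem_range, mem_piAntidiag, mem_univ, implies_true,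
    and_true]
  exact ⟨fun hk => by lia, fun hk => ⟨fun i => by have := apply_le_sum i; lia, by lia⟩⟩

theorem sum_pow_div_prod_sub_eq_complete_homogeneous_general {ι F : Type*} [Fintype ι]
    [DecidableEq ι] [Nonempty ι] [Field F] {x : ι → F} (hx : Function.Injective x) (m : ℕ) :
    ∑ j, x j ^ m / ∏ s ∈ univ.erase j, (x j - x s) =
      ∑ k ∈ Fintype.piFinset fun _ : ι => range (m + 2) with ∑ i, k i + Fintype.card ι = m + 1,
        ∏ i, x i ^ k i := by
  have card_pos : 0 < Fintype.card ι := Fintype.card_pos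
  rw [sum_pow_div_prod_sub_eq_ite hx.injOn univ_nonempty, card_univ]
  split_ifs with h
  · rw [filter_sum_add_eq_piAntidiag (d := m - (Fintype.card ι - 1)) (by lia)]
  · rw [filter_false_of_mem fun k _ => by lia, sum_empty]

/-- for pairwise distinct `x_1, …, x_n` and `m ≥ 0`,
`Σ_j x_j^m / ∏_{s≠j}(x_j − x_s)` equals the complete homogeneous symmetric
polynomial of degree `m − n + 1` (the sum over all tuples of non-negative
integers `k` with `k_1 + ⋯ + k_n = m − n + 1`, i.e. `Σ k + n = m + 1`). -/
theorem sum_pow_div_prod_sub_eq_complete_homogeneous (n : ℕ) (hn : 1 ≤ n)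
    (x : Fin n → ℂ) (hx : Function.Injective x) (m : ℕ) :
    ∑ j : Fin n, x j ^ m / ∏ s ∈ Finset.univ.erase j, (x j - x s) =
      ∑ k ∈ Finset.filter (fun k : Fin n → ℕ => (∑ i, k i) + n = m + 1)
          (Fintype.piFinset fun _ : Fin n => Finset.range (m + 2)),
        ∏ i, x i ^ k i := by
  have : Nonempty (Fin n) := Fin.pos_iff_nonempty.mp hn
  simpa only [Fintype.card_fin] using sum_pow_div_prod_sub_eq_complete_homogeneous_general hx m
end

section
/- For every integer m ≥ 1 and all real numbers a_1,…,a_m, b_1,…,b_m, one has Σ_{j=1}^{m} Σ_{k=1}^{m} |a_j − b_k| − Σ_{1≤j<k≤m} |a_j − a_k| − Σ_{1≤j<k≤m} |b_j − b_k| ≥ 0. -/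
open Finset

/-!
The kernel `min x y - t` is positive semidefinite on `[t, ∞)`: if `p` is the smallest of the points,
then `min x y - t = (min x y - p) + (p - t)`, where the first kernel vanishes when `x = p` or
`y = p` and the second is a nonnegative constant, so one can induct on the number of points. Since
`|x - y| = (x - t) + (y - t) - 2 (min x y - t)`, the kernel `|x - y|` is negative semidefinite on
weights of total zero. The inequality is this fact for weight `1` at each `a j` and `-1` at each
`b k`.
-/

section Kernel

variable {ι R M : Type*} [Ring R] [LinearOrder R] [IsOrderedRing R]
  [AddCommGroup M] [LinearOrder M] [IsOrderedAddMonoid M] [Module R M] [PosSMulMono R M]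

theorem sum_sum_mul_smul_min_sub_nonneg (s : Finset ι) (c : ι → R) (x : ι → M) {t : M}
    (ht : ∀ i ∈ s, t ≤ x i) :
    0 ≤ ∑ i ∈ s, ∑ j ∈ s, (c i * c j) • (min (x i) (x j) - t) := by
  classical
  induction s using Finset.induction_on_min_value x generalizing t with
  | empty => simp
  | insert p s hp hmin ih =>
    have drop_p : ∑ i ∈ insert p s, ∑ j ∈ insert p s, (c i * c j) • (min (x i) (x j) - x p) =
        ∑ i ∈ s, ∑ j ∈ s, (c i * c j) • (min (x i) (x j) - x p) := by
      simp +contextual [sum_insert hp, hmin]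
    calc 0 ≤ ∑ i ∈ s, ∑ j ∈ s, (c i * c j) • (min (x i) (x j) - x p) +
          ((∑ i ∈ insert p s, c i) * ∑ j ∈ insert p s, c j) • (x p - t) :=
          add_nonneg (ih hmin)
            (smul_nonneg (mul_self_nonneg _) (sub_nonneg.2 (ht p (mem_insert_self p s))))
      _ = ∑ i ∈ insert p s, ∑ j ∈ insert p s, (c i * c j) • (min (x i) (x j) - t) := by
          simp only [← drop_p, sum_mul_sum, sum_smul, ← sum_add_distrib, ← smul_add,
            sub_add_sub_cancel]

theorem sum_sum_mul_smul_abs_sub_nonpos (s : Finset ι) (c : ι → R) (x : ι → M)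
    (hc : ∑ i ∈ s, c i = 0) :
    ∑ i ∈ s, ∑ j ∈ s, (c i * c j) • |x i - x j| ≤ 0 := by
  classical
  obtain ⟨t, ht⟩ := (s.image x).bddBelow
  have abs_eq (y z : M) : |y - z| = (y - t) + (z - t) - 2 • (min y z - t) := by
    rw [nsmul_sub, two_nsmul_inf_eq_add_sub_abs_sub, abs_sub_comm]
    abel
  have left_zero : ∑ i ∈ s, ∑ j ∈ s, (c i * c j) • (x i - t) = 0 := by
    simp only [← sum_smul, ← mul_sum, hc, mul_zero, zero_smul, sum_const_zero]
  have right_zero : ∑ i ∈ s, ∑ j ∈ s, (c i * c j) • (x j - t) = 0 := by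
    rw [sum_comm]
    simp only [← sum_smul, ← sum_mul, hc, zero_mul, zero_smul, sum_const_zero]
  have min_nonneg : 0 ≤ ∑ i ∈ s, ∑ j ∈ s, (c i * c j) • (min (x i) (x j) - t) :=
    sum_sum_mul_smul_min_sub_nonneg s c x fun i hi ↦ ht (mem_image_of_mem x hi)
  calc ∑ i ∈ s, ∑ j ∈ s, (c i * c j) • |x i - x j|
      = ∑ i ∈ s, ∑ j ∈ s, (c i * c j) • (x i - t) + ∑ i ∈ s, ∑ j ∈ s, (c i * c j) • (x j - t) -
          2 • ∑ i ∈ s, ∑ j ∈ s, (c i * c j) • (min (x i) (x j) - t) := by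
        simp only [abs_eq, smul_sum, ← sum_add_distrib, ← sum_sub_distrib, ← smul_add,
          smul_comm 2 (_ : R), ← smul_sub (_ : R) (_ + _)]
    _ ≤ 0 := by
        rw [left_zero, right_zero, add_zero, zero_sub]
        exact neg_nonpos.2 (nsmul_nonneg min_nonneg 2)

end Kernel

theorem sum_sum_eq_two_nsmul_sum_sum_Ioi {ι M : Type*} [Fintype ι] [LinearOrder ι]
    [LocallyFiniteOrderTop ι] [AddCommMonoid M] {f : ι → ι → M}
    (hsymm : ∀ i j, f i j = f j i) (hdiag : ∀ i, f i i = 0) :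
    ∑ i, ∑ j, f i j = 2 • ∑ i, ∑ j ∈ Ioi i, f i j := by
  let : LocallyFiniteOrderBot ι := .ofIic ι (fun a ↦ {x | x ≤ a}) (by simp)
  calc ∑ i, ∑ j, f i j = ∑ i, ∑ j ∈ {i}ᶜ, f j i := by
        refine sum_congr rfl fun i _ ↦ ?_
        rw [Fintype.sum_eq_add_sum_compl i, hdiag, zero_add]
        exact sum_congr rfl fun j _ ↦ hsymm i j
    _ = ∑ i, ∑ j ∈ Ioi i, (f j i + f i j) := (sum_sum_Ioi_add_eq_sum_sum_off_diag f).symm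
    _ = 2 • ∑ i, ∑ j ∈ Ioi i, f i j := by
        simp only [hsymm, ← two_nsmul, smul_sum]

section Families

variable {ι κ M : Type*} [Fintype ι] [Fintype κ]
  [AddCommGroup M] [LinearOrder M] [IsOrderedAddMonoid M]

theorem sum_sum_abs_sub_add_le_two_nsmul (h : Fintype.card ι = Fintype.card κ)
    (a : ι → M) (b : κ → M) :
    ∑ i, ∑ j, |a i - a j| + ∑ i, ∑ j, |b i - b j| ≤ 2 • ∑ i, ∑ j, |a i - b j| := by
  have swap : ∑ j, ∑ i, |b j - a i| = ∑ i, ∑ j, |a i - b j| := by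
    rw [sum_comm]
    simp only [abs_sub_comm]
  let sign : ι ⊕ κ → ℤ := Sum.elim 1 (-1)
  let point : ι ⊕ κ → M := Sum.elim a b
  have sign_sum : ∑ p, sign p = 0 := by simp [sign, h]
  rw [← sub_nonpos]
  calc ∑ i, ∑ j, |a i - a j| + ∑ i, ∑ j, |b i - b j| - 2 • ∑ i, ∑ j, |a i - b j|
      = ∑ p, ∑ q, (sign p * sign q) • |point p - point q| := by
        simp only [sign, point, Fintype.sum_sum_type, Sum.elim_inl, Sum.elim_inr, Pi.one_apply,
          Pi.neg_apply, mul_one, one_smul, mul_neg, neg_smul, sum_add_distrib,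
          sum_neg_distrib, swap]
        abel
    _ ≤ 0 := sum_sum_mul_smul_abs_sub_nonpos univ sign point sign_sum

theorem abs_sum_inequality_general [LinearOrder ι] [LocallyFiniteOrderTop ι]
    [LinearOrder κ] [LocallyFiniteOrderTop κ]
    (h : Fintype.card ι = Fintype.card κ) (a : ι → M) (b : κ → M) :
    0 ≤ (∑ j, ∑ k, |a j - b k|) - (∑ j, ∑ k ∈ Ioi j, |a j - a k|) -
        (∑ j, ∑ k ∈ Ioi j, |b j - b k|) := by
  have sum_le := sum_sum_abs_sub_add_le_two_nsmul h a b
  rw [sum_sum_eq_two_nsmul_sum_sum_Ioi (fun _ _ ↦ abs_sub_comm _ _) (by simp),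
    sum_sum_eq_two_nsmul_sum_sum_Ioi (fun _ _ ↦ abs_sub_comm _ _) (by simp),
    ← nsmul_add, nsmul_le_nsmul_iff_right two_ne_zero] at sum_le
  rwa [sub_sub, sub_nonneg]

end Families

/-- Gradshteyn–Ryzhik 11.118: for real numbers `a_1,…,a_m` and
`b_1,…,b_m`, `Σ_{j,k} |a_j − b_k| − Σ_{j<k} |a_j − a_k| − Σ_{j<k} |b_j − b_k| ≥ 0`. -/
theorem abs_sum_inequality (m : ℕ) (hm : 1 ≤ m) (a b : Fin m → ℝ) :
    0 ≤ (∑ j : Fin m, ∑ k : Fin m, |a j - b k|) -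
        (∑ j : Fin m, ∑ k ∈ Finset.Ioi j, |a j - a k|) -
        (∑ j : Fin m, ∑ k ∈ Finset.Ioi j, |b j - b k|) :=
  abs_sum_inequality_general rfl a b
end

section
/- Fix ℏ > 0, N ≥ 2, and real numbers γ_{N1},…,γ_{NN}. For any two polynomials q_1, q_2 in the N(N−1)/2 variables (γ_{nj})_{1≤j≤n≤N−1} with complex coefficients, the function ℝ^{N(N−1)/2} → ℂ given by (γ_{nj}) ↦ μ_0(γ)·conj(q_1(γ))·q_2(γ)·w_N(γ) is Lebesgue integrable on ℝ^{N(N−1)/2}; in particular the pairing integral ⟨q_1, q_2 w_N⟩ = ∫_{ℝ^{N(N−1)/2}} μ_0(γ)·conj(q_1(γ))·q_2(γ)·w_N(γ) ∏ dγ_{nj} converges absolutely. -/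
open Finset MeasureTheory

noncomputable section

/-- Index set of the Gelfand–Zetlin variables `(n, j)` with `1 ≤ j ≤ n ≤ N − 1`
(the pair `(p.1, p.2)` encodes `(n, j)`). -/
abbrev GZIdx (N : ℕ) := {p : Fin N × Fin N // 1 ≤ (p.2 : ℕ) ∧ (p.2 : ℕ) ≤ (p.1 : ℕ)}

/-- The Gelfand–Zetlin array with lower levels given by the real variables `ξ`
and top row `g`. -/
def gzOf (N : ℕ) (g : ℕ → ℂ) (ξ : GZIdx N → ℝ) : GZ := fun n j =>
  if h : 1 ≤ j ∧ j ≤ n ∧ n < N then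
    ((ξ ⟨(⟨n, h.2.2⟩, ⟨j, lt_of_le_of_lt h.2.1 h.2.2⟩), h.1, h.2.1⟩ : ℝ) : ℂ)
  else g j

/-- `ℏ^z := exp(z log ℏ)`. -/
def hpow (ℏ : ℝ) (z : ℂ) : ℂ := Complex.exp (z * (Real.log ℏ : ℂ))

/-- The factor `s_n(γ_n, γ_{n+1})`. -/
def sW (ℏ : ℝ) (n : ℕ) (γ : GZ) : ℂ :=
  ∏ k ∈ Icc 1 n, ∏ m ∈ Icc 1 (n + 1),
    hpow ℏ ((γ n k - γ (n + 1) m) / (Complex.I * ℏ) + 1 / 2) *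
      Complex.Gamma ((γ n k - γ (n + 1) m) / (Complex.I * ℏ) + 1 / 2)

/-- The Whittaker vector `w_N`. -/
def wWhit (ℏ : ℝ) (N : ℕ) (γ : GZ) : ℂ :=
  Complex.exp (-((Real.pi / ℏ : ℝ) : ℂ) *
      ∑ n ∈ Icc 1 (N - 1), ((n : ℂ) - 1) * ∑ j ∈ Icc 1 n, γ n j) *
    ∏ n ∈ Icc 1 (N - 1), sW ℏ n γ

/-- The measure density `μ_0`. -/
def mu0 (ℏ : ℝ) (N : ℕ) (γ : GZ) : ℂ :=
  ∏ n ∈ Icc 2 (N - 1), ∏ p ∈ Icc 1 n, ∏ s ∈ Ico 1 p,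
    (γ n s - γ n p) *
      (Complex.exp (((2 * Real.pi / ℏ : ℝ) : ℂ) * γ n p) -
        Complex.exp (((2 * Real.pi / ℏ : ℝ) : ℂ) * γ n s))

/-!
On the real locus `|Γ(1/2 + iy)|² = π / cosh (πy)`, so the Gamma factors of `w_N` decay like
`exp (-(π/2ℏ) ∑ |γ_{n,k} - γ_{n+1,m}|)`, while `μ_0` grows at most like a polynomial times
`exp ((π/ℏ) ∑ (n-1) ∑ γ_{n,j} + (π/ℏ) ∑ |γ_{n,s} - γ_{n,p}|)`. The linear term is exactly cancelled
by the exponential prefactor of `w_N`, and what remains is to show that the *gap* `A - 2B` between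
the inter-row variation `A` and twice the intra-row variation `B` dominates the norm of the lower
rows. Moving the top row to `0` changes `A` by a bounded amount and leaves `B` alone, so the top row
may be taken constant.

Since `|a - b|` is the integral over `t` of `|1_{a < t} - 1_{b < t}|`, the gap is the integral of
the gaps of the thresholded `0`-`1` arrays. If such an array has row sums `f_n`, with increments
`d_n = f_{n+1} - f_n`, its gap is `∑ d_n (d_n - 1) + f_N (N - f_N)`. All terms are nonnegative,
and the sum is at least `2` unless every `d_n` is `0` or `1`, which forces an array whose top row
is constant to have all its entries equal to the top value. Hence the gap is at least twice the
distance of any entry from the top value.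
-/

/-- Total variation between consecutive rows: the sum of `|x_{n,k} - x_{n+1,m}|` over all `n < N`,
`1 ≤ k ≤ n`, `1 ≤ m ≤ n + 1`. The Gamma factors of `w_N` decay exponentially in it. -/
def interRowVariation {R : Type*} [AddCommGroup R] [LinearOrder R] (N : ℕ) (x : ℕ → ℕ → R) : R :=
  ∑ n ∈ range N, ∑ k ∈ Icc 1 n, ∑ m ∈ Icc 1 (n + 1), |x n k - x (n + 1) m|

/-- Total variation within rows: the sum of `|x_{n,s} - x_{n,p}|` over all `n < N` and
`1 ≤ s < p ≤ n`. The density `μ_0` grows exponentially in it. -/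
def intraRowVariation {R : Type*} [AddCommGroup R] [LinearOrder R] (N : ℕ) (x : ℕ → ℕ → R) : R :=
  ∑ n ∈ range N, ∑ p ∈ Icc 1 n, ∑ s ∈ Ico 1 p, |x n s - x n p|

/-- The sum of the `n`-th row of a triangular array; for a `0`-`1` array, the number of ones. -/
def rowSum {R : Type*} [AddCommMonoid R] (x : ℕ → ℕ → R) (n : ℕ) : R := ∑ j ∈ Icc 1 n, x n j

section BinaryArrays

theorem abs_sub_eq_of_binary {a b : ℤ} (ha : a = 0 ∨ a = 1) (hb : b = 0 ∨ b = 1) :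
    |a - b| = a + b - 2 * a * b := by
  rcases ha with rfl | rfl <;> rcases hb with rfl | rfl <;> norm_num

theorem sum_abs_sub_eq_of_binary {u v : ℕ → ℤ} (hu : ∀ j, u j = 0 ∨ u j = 1)
    (hv : ∀ j, v j = 0 ∨ v j = 1) (n m : ℕ) :
    ∑ k ∈ Icc 1 n, ∑ l ∈ Icc 1 m, |u k - v l| =
      m * (∑ j ∈ Icc 1 n, u j) + n * (∑ j ∈ Icc 1 m, v j)
        - 2 * (∑ j ∈ Icc 1 n, u j) * ∑ j ∈ Icc 1 m, v j := by
  simp only [abs_sub_eq_of_binary (hu _) (hv _), sum_sub_distrib, sum_add_distrib, ← sum_mul,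
    ← mul_sum, sum_const, Nat.card_Icc, Nat.add_sub_cancel, nsmul_eq_mul]

theorem sum_pairs_abs_sub_eq_of_binary {u : ℕ → ℤ} (hu : ∀ j, u j = 0 ∨ u j = 1) (n : ℕ) :
    ∑ p ∈ Icc 1 n, ∑ s ∈ Ico 1 p, |u s - u p| =
      (∑ j ∈ Icc 1 n, u j) * (n - ∑ j ∈ Icc 1 n, u j) := by
  induction n with
  | zero => simp
  | succ n ih =>
    have idempotent : u (n + 1) * u (n + 1) = u (n + 1) := by
      rcases hu (n + 1) with h | h <;> simp [h]
    rw [sum_Icc_succ_top (by omega), ih, sum_Icc_succ_top (by omega), Ico_add_one_right_eq_Icc]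
    simp only [abs_sub_eq_of_binary (hu _) (hu _), sum_sub_distrib, sum_add_distrib, ← sum_mul,
      ← mul_sum, sum_const, Nat.card_Icc, Nat.add_sub_cancel, nsmul_eq_mul]
    push_cast
    linear_combination idempotent

variable {h : ℕ → ℕ → ℤ}

-- Level by level, the difference of the two sides is the increment of `f n * (n - f n)`
-- with `f = rowSum h`, so the sum telescopes.
theorem interRowVariation_sub_two_mul_intraRowVariation_of_binary
    (hh : ∀ n j, h n j = 0 ∨ h n j = 1) (N : ℕ) :
    interRowVariation N h - 2 * intraRowVariation N h =
      ∑ n ∈ range N, (rowSum h (n + 1) - rowSum h n) * (rowSum h (n + 1) - rowSum h n - 1)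
        + rowSum h N * (N - rowSum h N) := by
  have telescope := sum_range_sub (fun n : ℕ => rowSum h n * (n - rowSum h n)) N
  have row_zero : rowSum h 0 = 0 := by simp [rowSum]
  rw [row_zero, zero_mul, sub_zero] at telescope
  rw [← telescope, interRowVariation, intraRowVariation, mul_sum, ← sum_sub_distrib,
    ← sum_add_distrib]
  refine sum_congr rfl fun n _ => ?_
  rw [sum_abs_sub_eq_of_binary (hh n) (hh (n + 1)), sum_pairs_abs_sub_eq_of_binary (hh n)]
  simp only [rowSum]
  push_cast
  ring

theorem le_rowSum_and_rowSum_le_of_binary (hh : ∀ n j, h n j = 0 ∨ h n j = 1)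
    {n j : ℕ} (hj : j ∈ Icc 1 n) :
    h n j ≤ rowSum h n ∧ rowSum h n ≤ n - 1 + h n j := by
  have nonneg (i : ℕ) : 0 ≤ h n i := by rcases hh n i with e | e <;> simp [e]
  have le_one (i : ℕ) : 0 ≤ 1 - h n i := by rcases hh n i with e | e <;> simp [e]
  have lower := single_le_sum (fun i _ => nonneg i) hj
  have upper := single_le_sum (fun i _ => le_one i) hj
  simp only [sum_sub_distrib, sum_const, Nat.card_Icc, Nat.add_sub_cancel, nsmul_eq_mul,
    mul_one] at upper
  exact ⟨lower, by rw [rowSum]; linarith⟩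

-- If the row sums grow by `0` or `1` per level, a single entry differing from the constant
-- top row would make `rowSum h k` incompatible with the top value `0` or `N`.
theorem eq_top_of_rowSum_increments_of_binary (hh : ∀ n j, h n j = 0 ∨ h n j = 1)
    {N k j : ℕ} {a : ℤ} (htop : ∀ i ∈ Icc 1 N, h N i = a) (hj : j ∈ Icc 1 k) (hk : k ≤ N)
    (hstep : ∀ n ∈ Ico k N, 0 ≤ rowSum h (n + 1) - rowSum h n ∧
      rowSum h (n + 1) - rowSum h n ≤ 1) :
    h k j = a := by
  have ha : a = 0 ∨ a = 1 := by
    rw [← htop j (Icc_subset_Icc_right hk hj)]; exact hh N j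
  have top_sum : rowSum h N = N * a := by simp [rowSum, sum_congr rfl htop]
  have increment := sum_Ico_sub (rowSum h) hk
  have increment_nonneg := sum_nonneg fun n hn => (hstep n hn).1
  have increment_le := sum_le_card_nsmul _ _ _ fun n hn => (hstep n hn).2
  rw [Nat.card_Ico, nsmul_eq_mul, mul_one, Nat.cast_sub hk] at increment_le
  rw [increment, top_sum] at increment_nonneg increment_le
  obtain ⟨entry_le, le_entry⟩ := le_rowSum_and_rowSum_le_of_binary hh hj
  rcases ha with rfl | rfl <;> rcases hh k j with e | e <;> simp only [e] at entry_le le_entry ⊢ <;>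
    linarith

theorem two_mul_abs_sub_top_le_of_binary (hh : ∀ n j, h n j = 0 ∨ h n j = 1)
    {N k j : ℕ} {a : ℤ} (htop : ∀ i ∈ Icc 1 N, h N i = a) (hj : j ∈ Icc 1 k) (hk : k ≤ N) :
    2 * |h k j - a| ≤ interRowVariation N h - 2 * intraRowVariation N h := by
  have ha : a = 0 ∨ a = 1 := by
    rw [← htop j (Icc_subset_Icc_right hk hj)]; exact hh N j
  have top_term : rowSum h N * (N - rowSum h N) = 0 := by
    have : rowSum h N = N * a := by simp [rowSum, sum_congr rfl htop]
    rcases ha with rfl | rfl <;> simp [this]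
  have increment_nonneg (d : ℤ) : 0 ≤ d * (d - 1) := by
    rcases le_or_gt d 0 with hd | hd <;> nlinarith
  rw [interRowVariation_sub_two_mul_intraRowVariation_of_binary hh, top_term, add_zero]
  by_cases hne : h k j = a
  · rw [hne, sub_self, abs_zero, mul_zero]
    exact sum_nonneg fun n _ => increment_nonneg _
  · have exists_jump : ∃ n ∈ Ico k N, ¬(0 ≤ rowSum h (n + 1) - rowSum h n ∧
        rowSum h (n + 1) - rowSum h n ≤ 1) := by
      by_contra! hstep
      exact hne (eq_top_of_rowSum_increments_of_binary hh htop hj hk hstep)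
    obtain ⟨n, hn, hjump⟩ := exists_jump
    have abs_le_one : |h k j - a| ≤ 1 := by
      rcases ha with rfl | rfl <;> rcases hh k j with e | e <;> simp [e]
    have two_le_jump {d : ℤ} (hd : ¬(0 ≤ d ∧ d ≤ 1)) : 2 ≤ d * (d - 1) := by
      rcases lt_or_ge d 0 with hneg | hpos
      · nlinarith
      · nlinarith [not_le.mp fun hle => hd ⟨hpos, hle⟩]
    calc 2 * |h k j - a| ≤ 2 := by linarith
      _ ≤ _ := two_le_jump hjump
      _ ≤ _ := single_le_sum (fun n _ => increment_nonneg (rowSum h (n + 1) - rowSum h n))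
        (mem_range.mpr (mem_Ico.mp hn).2)

end BinaryArrays

section LayerCake

/-- The indicator of `a < t`. Thresholding at `t` turns a real array into a `0`-`1` array; the
values are integers so that the combinatorics of `0`-`1` arrays applies. -/
def threshold (t a : ℝ) : ℤ := if a < t then 1 else 0

theorem threshold_binary (t a : ℝ) : threshold t a = 0 ∨ threshold t a = 1 := by
  unfold threshold; split_ifs <;> simp

theorem abs_threshold_sub_eq_indicator (a b : ℝ) :
    (fun t => ((|threshold t a - threshold t b| : ℤ) : ℝ)) = (Set.uIoc a b).indicator 1 := by
  funext t
  by_cases ha : a < t <;> by_cases hb : b < t <;>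
    simp [threshold, Set.indicator, Set.mem_uIoc, ha, hb, not_le.mpr, not_lt.mp]

theorem integrable_abs_threshold_sub (a b : ℝ) :
    Integrable fun t => ((|threshold t a - threshold t b| : ℤ) : ℝ) := by
  rw [abs_threshold_sub_eq_indicator, integrable_indicator_iff measurableSet_uIoc]
  exact integrableOn_const (by simp)

theorem integral_abs_threshold_sub (a b : ℝ) :
    ∫ t, ((|threshold t a - threshold t b| : ℤ) : ℝ) = |a - b| := by
  rw [abs_threshold_sub_eq_indicator, integral_indicator_one measurableSet_uIoc, measureReal_def,
    Real.volume_uIoc, ENNReal.toReal_ofReal (abs_nonneg _), abs_sub_comm]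

variable (N : ℕ) (x : ℕ → ℕ → ℝ)

theorem integrable_interRowVariation_threshold :
    Integrable fun t => ((interRowVariation N fun n j => threshold t (x n j) : ℤ) : ℝ) := by
  simp only [interRowVariation, Int.cast_sum]
  exact integrable_finsetSum _ fun n _ => integrable_finsetSum _ fun k _ =>
    integrable_finsetSum _ fun m _ => integrable_abs_threshold_sub _ _

theorem integral_interRowVariation_threshold :
    ∫ t, ((interRowVariation N fun n j => threshold t (x n j) : ℤ) : ℝ) =
      interRowVariation N x := by
  simp (maxDischargeDepth := 4) only [interRowVariation, Int.cast_sum, integral_finsetSum,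
    integral_abs_threshold_sub, integrable_abs_threshold_sub, integrable_finsetSum, implies_true]

theorem integrable_intraRowVariation_threshold :
    Integrable fun t => ((intraRowVariation N fun n j => threshold t (x n j) : ℤ) : ℝ) := by
  simp only [intraRowVariation, Int.cast_sum]
  exact integrable_finsetSum _ fun n _ => integrable_finsetSum _ fun p _ =>
    integrable_finsetSum _ fun s _ => integrable_abs_threshold_sub _ _

theorem integral_intraRowVariation_threshold :
    ∫ t, ((intraRowVariation N fun n j => threshold t (x n j) : ℤ) : ℝ) =
      intraRowVariation N x := by
  simp (maxDischargeDepth := 4) only [intraRowVariation, Int.cast_sum, integral_finsetSum,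
    integral_abs_threshold_sub, integrable_abs_threshold_sub, integrable_finsetSum, implies_true]

variable {N x}

theorem two_mul_abs_sub_top_le {k j : ℕ} {a : ℝ} (htop : ∀ i ∈ Icc 1 N, x N i = a)
    (hj : j ∈ Icc 1 k) (hk : k ≤ N) :
    2 * |x k j - a| ≤ interRowVariation N x - 2 * intraRowVariation N x := by
  have intra_integrable := (integrable_intraRowVariation_threshold N x).const_mul 2
  calc 2 * |x k j - a| = ∫ t, 2 * ((|threshold t (x k j) - threshold t a| : ℤ) : ℝ) := by
        rw [integral_const_mul, integral_abs_threshold_sub]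
    _ ≤ ∫ t, (((interRowVariation N fun n j => threshold t (x n j) : ℤ) : ℝ)
          - 2 * ((intraRowVariation N fun n j => threshold t (x n j) : ℤ) : ℝ)) := by
        refine integral_mono ((integrable_abs_threshold_sub _ _).const_mul 2)
          ((integrable_interRowVariation_threshold N x).sub intra_integrable) fun t => ?_
        exact_mod_cast two_mul_abs_sub_top_le_of_binary
          (h := fun n j => threshold t (x n j)) (fun n j => threshold_binary t (x n j))
          (fun i hi => by rw [htop i hi]) hj hk
    _ = interRowVariation N x - 2 * intraRowVariation N x := by
        rw [integral_sub (integrable_interRowVariation_threshold N x) intra_integrable,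
          integral_const_mul, integral_interRowVariation_threshold,
          integral_intraRowVariation_threshold]

end LayerCake

section Subexponential

open Asymptotics

/-- A function on a normed space has subexponential growth if it is bounded by a multiple of
`exp (ε ‖x‖)` for every `ε > 0`. Bounding along `⊤` means bounding at every point, not merely
at infinity. -/
def IsSubexponential {E F : Type*} [Norm E] [Norm F] (f : E → F) : Prop :=
  ∀ ε > 0, f =O[⊤] fun x => Real.exp (ε * ‖x‖)

namespace IsSubexponential

variable {E F 𝕜 : Type*} [SeminormedAddCommGroup E] [SeminormedAddCommGroup F] [NormedField 𝕜]

theorem const (c : F) : IsSubexponential fun _ : E => c := fun ε hε =>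
  isBigO_of_le' ⊤ (c := ‖c‖) fun x => by
    rw [Real.norm_of_nonneg (Real.exp_nonneg _)]
    exact le_mul_of_one_le_right (norm_nonneg c) (Real.one_le_exp (by positivity))

theorem add {f g : E → F} (hf : IsSubexponential f) (hg : IsSubexponential g) :
    IsSubexponential fun x => f x + g x := fun ε hε => (hf ε hε).add (hg ε hε)

theorem sub {f g : E → F} (hf : IsSubexponential f) (hg : IsSubexponential g) :
    IsSubexponential fun x => f x - g x := fun ε hε => (hf ε hε).sub (hg ε hε)

theorem mul {f g : E → 𝕜} (hf : IsSubexponential f) (hg : IsSubexponential g) :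
    IsSubexponential fun x => f x * g x := fun ε hε => by
  refine ((hf (ε / 2) (half_pos hε)).mul (hg (ε / 2) (half_pos hε))).congr_right fun x => ?_
  rw [← Real.exp_add, ← add_mul, add_halves]

theorem prod {α : Type*} (s : Finset α) {f : α → E → 𝕜} (hf : ∀ a ∈ s, IsSubexponential (f a)) :
    IsSubexponential fun x => ∏ a ∈ s, f a x := by
  induction s using Finset.cons_induction with
  | empty => simpa only [prod_empty] using const (1 : 𝕜)
  | cons a s ha ih =>
    simp only [prod_cons]
    exact (hf a (mem_cons_self a s)).mul (ih fun b hb => hf b (mem_cons_of_mem hb))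

theorem conj {𝕂 : Type*} [RCLike 𝕂] {f : E → 𝕂} (hf : IsSubexponential f) :
    IsSubexponential fun x => starRingEnd 𝕂 (f x) := fun ε hε =>
  .of_norm_left (by simpa only [RCLike.norm_conj] using (hf ε hε).norm_left)

theorem mvPolynomial_eval {ι : Type*} {f : ι → E → 𝕜} (hf : ∀ i, IsSubexponential (f i))
    (q : MvPolynomial ι 𝕜) : IsSubexponential fun x => MvPolynomial.eval (fun i => f i x) q := by
  induction q using MvPolynomial.induction_on with
  | C a => simpa only [MvPolynomial.eval_C] using const a
  | add p q hp hq => simpa only [map_add] using hp.add hq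
  | mul_X p i hp => simpa only [map_mul, MvPolynomial.eval_X] using hp.mul (hf i)

theorem continuousLinearMap [NormedSpace ℝ E] [NormedSpace ℝ F] (L : E →L[ℝ] F) :
    IsSubexponential L := fun ε hε => by
  refine (L.isBigO_id ⊤).trans (isBigO_of_le' ⊤ (c := ε⁻¹) fun x => ?_)
  rw [Real.norm_of_nonneg (Real.exp_nonneg _), ← div_eq_inv_mul, le_div_iff₀' hε]
  linarith [Real.add_one_le_exp (ε * ‖x‖)]

end IsSubexponential

variable {E : Type*} [NormedAddCommGroup E] [NormedSpace ℝ E] [FiniteDimensional ℝ E]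
  [MeasurableSpace E] [BorelSpace E] (μ : Measure E) [μ.IsAddHaarMeasure]

theorem integrable_exp_neg_mul_norm {c : ℝ} (hc : 0 < c) :
    Integrable (fun x : E => Real.exp (-(c * ‖x‖))) μ := by
  set r := Module.finrank ℝ E + 1 with hr
  have power_integrable : Integrable (fun x : E => (1 + ‖x‖) ^ (-(r : ℝ))) μ :=
    integrable_one_add_norm (by simp [hr])
  refine (power_integrable.const_mul (Real.exp c * r.factorial / c ^ r)).mono'
    (by fun_prop) (.of_forall fun x => ?_)
  have power_le := Real.pow_div_factorial_le_exp (c * (1 + ‖x‖)) (by positivity) r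
  rw [Real.norm_of_nonneg (Real.exp_nonneg _), Real.rpow_neg (by positivity), Real.rpow_natCast]
  calc Real.exp (-(c * ‖x‖)) = Real.exp c * (Real.exp (c * (1 + ‖x‖)))⁻¹ := by
        rw [← Real.exp_neg, ← Real.exp_add]; congr 1; ring
    _ ≤ Real.exp c * ((c * (1 + ‖x‖)) ^ r / r.factorial)⁻¹ := by gcongr
    _ = Real.exp c * r.factorial / c ^ r * ((1 + ‖x‖) ^ r)⁻¹ := by
        rw [mul_pow]; field_simp

variable {μ}

theorem IsSubexponential.integrable_mul_of_isBigO_exp {𝕜 : Type*} [NormedField 𝕜] {f g : E → 𝕜}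
    {c : ℝ} (hc : 0 < c) (hf : IsSubexponential f)
    (hg : g =O[⊤] fun x => Real.exp (-(c * ‖x‖))) (hfm : AEStronglyMeasurable f μ)
    (hgm : AEStronglyMeasurable g μ) :
    Integrable (fun x => f x * g x) μ := by
  have decay : (fun x => f x * g x) =O[⊤] fun x => Real.exp (-(c / 2 * ‖x‖)) :=
    ((hf (c / 2) (half_pos hc)).mul hg).congr_right fun x => by
      rw [← Real.exp_add]; congr 1; ring
  exact decay.integrable (hfm.mul hgm) (integrable_exp_neg_mul_norm μ (half_pos hc))

end Subexponential

section GammaFactor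

theorem norm_sq_Gamma_half_add_mul_I (y : ℝ) :
    ‖Complex.Gamma (1 / 2 + y * Complex.I)‖ ^ 2 = Real.pi / Real.cosh (Real.pi * y) := by
  have reflection := Complex.Gamma_mul_Gamma_one_sub (1 / 2 + y * Complex.I)
  have one_sub_eq_conj :
      (1 : ℂ) - (1 / 2 + y * Complex.I) = starRingEnd ℂ (1 / 2 + y * Complex.I) := by
    simp [Complex.ext_iff]; norm_num
  have sin_eq_cosh :
      Complex.sin (Real.pi * (1 / 2 + y * Complex.I)) = (Real.cosh (Real.pi * y) : ℝ) := by
    rw [show (Real.pi * (1 / 2 + y * Complex.I) : ℂ)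
        = ((Real.pi * y : ℝ) : ℂ) * Complex.I + Real.pi / 2 by push_cast; ring,
      Complex.sin_add_pi_div_two, Complex.cos_mul_I, Complex.ofReal_cosh]
  rw [one_sub_eq_conj, Complex.Gamma_conj, Complex.mul_conj, sin_eq_cosh,
    Complex.normSq_eq_norm_sq] at reflection
  exact_mod_cast reflection

theorem exp_abs_le_two_mul_cosh (y : ℝ) : Real.exp |y| ≤ 2 * Real.cosh y := by
  rw [← Real.cosh_abs, Real.cosh_eq]
  linarith [Real.exp_pos (-|y|)]

theorem norm_Gamma_half_add_mul_I_le (y : ℝ) : ‖Complex.Gamma (1 / 2 + y * Complex.I)‖ ≤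
    √(2 * Real.pi) * Real.exp (-(Real.pi / 2 * |y|)) := by
  refine le_of_sq_le_sq ?_ (by positivity)
  have exp_sq : Real.exp (-(Real.pi / 2 * |y|)) ^ 2 = (Real.exp |Real.pi * y|)⁻¹ := by
    rw [← Real.exp_nat_mul, ← Real.exp_neg, abs_mul, abs_of_pos Real.pi_pos]
    congr 1; push_cast; ring
  rw [norm_sq_Gamma_half_add_mul_I, mul_pow, Real.sq_sqrt (by positivity), exp_sq,
    ← div_eq_mul_inv, div_le_div_iff₀ (Real.cosh_pos _) (Real.exp_pos _)]
  nlinarith [exp_abs_le_two_mul_cosh (Real.pi * y), Real.pi_pos]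

theorem continuous_Gamma_half_add_mul_I :
    Continuous fun y : ℝ => Complex.Gamma (1 / 2 + y * Complex.I) := by
  refine continuous_iff_continuousAt.mpr fun y =>
    ContinuousAt.comp' (Complex.continuousAt_Gamma _ fun m hm => ?_) (by fun_prop)
  have re_eq : (1 / 2 : ℝ) = -m := by simpa using congrArg Complex.re hm
  linarith [m.cast_nonneg (α := ℝ)]

theorem norm_hpow (ℏ : ℝ) (z : ℂ) : ‖hpow ℏ z‖ = Real.exp (z.re * Real.log ℏ) := by
  rw [hpow, Complex.norm_exp, Complex.re_mul_ofReal]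

theorem gammaFactor_arg_eq (ℏ a b : ℝ) : ((a : ℂ) - b) / (Complex.I * ℏ) + 1 / 2 =
    1 / 2 + (((b - a) / ℏ : ℝ) : ℂ) * Complex.I := by
  rw [mul_comm Complex.I, ← div_div, Complex.div_I]; push_cast; ring

theorem norm_gammaFactor_le {ℏ : ℝ} (hℏ : 0 < ℏ) (a b : ℝ) :
    ‖hpow ℏ (((a : ℂ) - b) / (Complex.I * ℏ) + 1 / 2) *
      Complex.Gamma (((a : ℂ) - b) / (Complex.I * ℏ) + 1 / 2)‖ ≤
    √ℏ * √(2 * Real.pi) * Real.exp (-(Real.pi / ℏ) * (|a - b| / 2)) := by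
  have norm_power : ‖hpow ℏ (1 / 2 + (((b - a) / ℏ : ℝ) : ℂ) * Complex.I)‖ = √ℏ := by
    rw [norm_hpow, Real.sqrt_eq_rpow, Real.rpow_def_of_pos hℏ, mul_comm]
    congr 2
    simp
  rw [gammaFactor_arg_eq, norm_mul, norm_power, mul_assoc]
  refine mul_le_mul_of_nonneg_left
    ((norm_Gamma_half_add_mul_I_le _).trans_eq ?_) (Real.sqrt_nonneg ℏ)
  rw [abs_div, abs_of_pos hℏ, abs_sub_comm]
  congr 2; ring

end GammaFactor

section IntegrandBounds

@[to_additive]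
theorem prod_Icc_pred_eq_prod_range {M : Type*} [CommMonoid M] {f : ℕ → M} {a : ℕ} (ha : 0 < a)
    (hf : ∀ n < a, f n = 1) (N : ℕ) : ∏ n ∈ Icc a (N - 1), f n = ∏ n ∈ range N, f n :=
  prod_subset (fun n hn => by simp only [mem_Icc, mem_range] at *; omega) fun n hn hna =>
    hf n (by simp only [mem_Icc, mem_range] at *; omega)

theorem abs_exp_sub_exp_le_exp_max (a b : ℝ) :
    |Real.exp a - Real.exp b| ≤ Real.exp (max a b) := by
  rw [abs_le]
  have exp_left := Real.exp_le_exp.mpr (le_max_left a b)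
  have exp_right := Real.exp_le_exp.mpr (le_max_right a b)
  constructor <;> linarith [Real.exp_pos a, Real.exp_pos b]

theorem sum_pairs_add_eq {R : Type*} [CommRing R] (u : ℕ → R) (n : ℕ) :
    ∑ p ∈ Icc 1 n, ∑ s ∈ Ico 1 p, (u p + u s) = (n - 1) * ∑ j ∈ Icc 1 n, u j := by
  induction n with
  | zero => simp
  | succ n ih =>
    rw [sum_Icc_succ_top (by omega), ih, sum_Icc_succ_top (by omega), Ico_add_one_right_eq_Icc,
      sum_add_distrib, sum_const, Nat.card_Icc, Nat.add_sub_cancel, nsmul_eq_mul]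
    push_cast
    ring

/-- The linear form `∑ₙ (n - 1) ∑ⱼ x_{n,j}` in the exponent of `w_N`. -/
def weightedRowSum (N : ℕ) (x : ℕ → ℕ → ℝ) : ℝ := ∑ n ∈ range N, (n - 1) * rowSum x n

/-- The polynomial part of `μ_0`: the product of the Vandermonde products of all rows
below the top one. -/
def rowVandermonde (N : ℕ) (x : ℕ → ℕ → ℝ) : ℝ :=
  ∏ n ∈ range N, ∏ p ∈ Icc 1 n, ∏ s ∈ Ico 1 p, (x n s - x n p)

variable {ℏ : ℝ} (N : ℕ) (x : ℕ → ℕ → ℝ)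

theorem mu0_eq_prod_range (γ : GZ) : mu0 ℏ N γ =
    ∏ n ∈ range N, ∏ p ∈ Icc 1 n, ∏ s ∈ Ico 1 p, (γ n s - γ n p) *
      (Complex.exp (((2 * Real.pi / ℏ : ℝ) : ℂ) * γ n p) -
        Complex.exp (((2 * Real.pi / ℏ : ℝ) : ℂ) * γ n s)) :=
  prod_Icc_pred_eq_prod_range two_pos (fun n hn => by interval_cases n <;> simp) N

theorem wWhit_eq_prod_range (γ : GZ) : wWhit ℏ N γ =
    Complex.exp (-((Real.pi / ℏ : ℝ) : ℂ) * ∑ n ∈ range N, ((n : ℂ) - 1) * ∑ j ∈ Icc 1 n, γ n j) *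
      ∏ n ∈ range N, sW ℏ n γ := by
  rw [wWhit, sum_Icc_pred_eq_sum_range one_pos fun n hn => by simp [Nat.lt_one_iff.mp hn],
    prod_Icc_pred_eq_prod_range one_pos fun n hn => by simp [sW, Nat.lt_one_iff.mp hn]]

theorem norm_exp_sub_exp_le (hℏ : 0 < ℏ) (a b : ℝ) :
    ‖Complex.exp (((2 * Real.pi / ℏ : ℝ) : ℂ) * a) -
      Complex.exp (((2 * Real.pi / ℏ : ℝ) : ℂ) * b)‖ ≤
    Real.exp (Real.pi / ℏ * ((a + b) + |b - a|)) := by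
  rw [← Complex.ofReal_mul, ← Complex.ofReal_mul, ← Complex.ofReal_exp, ← Complex.ofReal_exp,
    ← Complex.ofReal_sub, Complex.norm_real, Real.norm_eq_abs]
  refine (abs_exp_sub_exp_le_exp_max _ _).trans_eq ?_
  rw [← mul_max_of_nonneg _ _ (by positivity), ← two_nsmul_sup_eq_add_add_abs_sub, nsmul_eq_mul]
  congr 1; push_cast; ring

theorem norm_mu0_le (hℏ : 0 < ℏ) :
    ‖mu0 ℏ N fun n j => (x n j : ℂ)‖ ≤ |rowVandermonde N x| *
      Real.exp (Real.pi / ℏ * (weightedRowSum N x + intraRowVariation N x)) := by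
  simp only [weightedRowSum, rowSum, ← sum_pairs_add_eq]
  simp only [intraRowVariation, ← sum_add_distrib, mul_sum, Real.exp_sum, rowVandermonde, abs_prod,
    ← prod_mul_distrib, mu0_eq_prod_range, norm_prod]
  gcongr with n _ p _ s _
  rw [norm_mul, ← Complex.ofReal_sub, Complex.norm_real, Real.norm_eq_abs]
  gcongr
  exact norm_exp_sub_exp_le hℏ _ _

theorem norm_wWhit_le (hℏ : 0 < ℏ) :
    ‖wWhit ℏ N fun n j => (x n j : ℂ)‖ ≤
      (∏ n ∈ range N, ∏ _k ∈ Icc 1 n, ∏ _m ∈ Icc 1 (n + 1), √ℏ * √(2 * Real.pi)) *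
        Real.exp (-(Real.pi / ℏ) * (weightedRowSum N x + interRowVariation N x / 2)) := by
  have norm_linear_exp : ‖Complex.exp (-((Real.pi / ℏ : ℝ) : ℂ) *
      ∑ n ∈ range N, ((n : ℂ) - 1) * ∑ j ∈ Icc 1 n, (x n j : ℂ))‖ =
      Real.exp (-(Real.pi / ℏ) * weightedRowSum N x) := by
    rw [← Real.norm_of_nonneg (Real.exp_nonneg _), ← Complex.norm_real]
    simp [weightedRowSum, rowSum]
  have norm_gamma_product : ‖∏ n ∈ range N, sW ℏ n fun n j => (x n j : ℂ)‖ ≤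
      (∏ n ∈ range N, ∏ _k ∈ Icc 1 n, ∏ _m ∈ Icc 1 (n + 1), √ℏ * √(2 * Real.pi)) *
        Real.exp (-(Real.pi / ℏ) * (interRowVariation N x / 2)) := by
    simp only [interRowVariation, sum_div, mul_sum, Real.exp_sum, ← prod_mul_distrib, sW,
      norm_prod]
    gcongr with n _ k _ m _
    exact norm_gammaFactor_le hℏ _ _
  rw [wWhit_eq_prod_range, norm_mul, norm_linear_exp, mul_add, Real.exp_add, mul_left_comm]
  gcongr

theorem norm_mu0_mul_wWhit_le (hℏ : 0 < ℏ) :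
    ‖mu0 ℏ N (fun n j => (x n j : ℂ)) * wWhit ℏ N fun n j => (x n j : ℂ)‖ ≤
      (∏ n ∈ range N, ∏ _k ∈ Icc 1 n, ∏ _m ∈ Icc 1 (n + 1), √ℏ * √(2 * Real.pi)) *
        (|rowVandermonde N x| *
          Real.exp (Real.pi / ℏ * (intraRowVariation N x - interRowVariation N x / 2))) := by
  rw [norm_mul]
  refine (mul_le_mul (norm_mu0_le N x hℏ) (norm_wWhit_le N x hℏ) (norm_nonneg _)
    (by positivity)).trans_eq ?_
  rw [mul_mul_mul_comm, ← Real.exp_add]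
  ring_nf

end IntegrandBounds

section GelfandZetlinArray

open Asymptotics

/-- The real form of `gzOf`: the array with lower rows `ξ` and top row `g`. -/
def gzReal (N : ℕ) (g : ℕ → ℝ) (ξ : GZIdx N → ℝ) (n j : ℕ) : ℝ :=
  if h : 1 ≤ j ∧ j ≤ n ∧ n < N then
    ξ ⟨(⟨n, h.2.2⟩, ⟨j, lt_of_le_of_lt h.2.1 h.2.2⟩), h.1, h.2.1⟩
  else g j

variable {N : ℕ} (g : ℕ → ℝ) (ξ : GZIdx N → ℝ)

theorem gzOf_ofReal : gzOf N (fun j => (g j : ℂ)) ξ = fun n j => (gzReal N g ξ n j : ℂ) := by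
  funext n j
  unfold gzOf gzReal
  split_ifs <;> rfl

theorem gzReal_apply_idx (p : GZIdx N) : gzReal N g ξ p.1.1 p.1.2 = ξ p :=
  dif_pos ⟨p.2.1, p.2.2, p.1.1.2⟩

theorem gzReal_apply_top (j : ℕ) : gzReal N g ξ N j = g j :=
  dif_neg fun h => h.2.2.false

theorem gzReal_eq_gzReal_of_lt (g' : ℕ → ℝ) {n j : ℕ} (hj : j ∈ Icc 1 n) (hn : n < N) :
    gzReal N g ξ n j = gzReal N g' ξ n j := by
  have h : 1 ≤ j ∧ j ≤ n ∧ n < N := ⟨(mem_Icc.mp hj).1, (mem_Icc.mp hj).2, hn⟩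
  rw [gzReal, dif_pos h, gzReal, dif_pos h]

theorem abs_gzReal_sub_gzReal_zero_le (n j : ℕ) :
    |gzReal N g ξ n j - gzReal N 0 ξ n j| ≤ |g j| := by
  unfold gzReal
  split_ifs <;> simp

theorem intraRowVariation_gzReal_eq (g' : ℕ → ℝ) :
    intraRowVariation N (gzReal N g ξ) = intraRowVariation N (gzReal N g' ξ) := by
  refine sum_congr rfl fun n hn => sum_congr rfl fun p hp => sum_congr rfl fun s hs => ?_
  have hs' : s ∈ Icc 1 n := by simp only [mem_Icc, mem_Ico] at *; omega
  rw [gzReal_eq_gzReal_of_lt g ξ g' hp (mem_range.mp hn),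
    gzReal_eq_gzReal_of_lt g ξ g' hs' (mem_range.mp hn)]

theorem interRowVariation_gzReal_zero_le :
    interRowVariation N (gzReal N 0 ξ) ≤ interRowVariation N (gzReal N g ξ) +
      ∑ n ∈ range N, ∑ _k ∈ Icc 1 n, ∑ m ∈ Icc 1 (n + 1), |g m| := by
  simp only [interRowVariation, ← sum_add_distrib]
  gcongr with n hn k hk m
  rw [gzReal_eq_gzReal_of_lt 0 ξ g hk (mem_range.mp hn)]
  exact (abs_sub_le _ _ _).trans
    (add_le_add_right (abs_gzReal_sub_gzReal_zero_le g ξ (n + 1) m) _)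

theorem two_mul_norm_le :
    2 * ‖ξ‖ ≤ interRowVariation N (gzReal N 0 ξ) - 2 * intraRowVariation N (gzReal N 0 ξ) := by
  have gap {k j : ℕ} (hj : j ∈ Icc 1 k) (hk : k ≤ N) : 2 * |gzReal N 0 ξ k j| ≤
      interRowVariation N (gzReal N 0 ξ) - 2 * intraRowVariation N (gzReal N 0 ξ) := by
    simpa only [sub_zero] using
      two_mul_abs_sub_top_le (a := 0) (fun i _ => gzReal_apply_top 0 ξ i) hj hk
  have gap_nonneg :
      0 ≤ interRowVariation N (gzReal N 0 ξ) - 2 * intraRowVariation N (gzReal N 0 ξ) := by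
    rcases N.eq_zero_or_pos with rfl | hN
    · simp [interRowVariation, intraRowVariation]
    · exact (by positivity : (0 : ℝ) ≤ _).trans (gap (mem_Icc.mpr ⟨le_rfl, hN⟩) le_rfl)
  rw [← le_div_iff₀' two_pos, pi_norm_le_iff_of_nonneg (by positivity)]
  intro p
  have := gap (mem_Icc.mpr p.2) p.1.1.2.le
  rw [gzReal_apply_idx, ← Real.norm_eq_abs] at this
  rwa [le_div_iff₀' two_pos]

theorem intraRowVariation_sub_interRowVariation_gzReal_le :
    intraRowVariation N (gzReal N g ξ) - interRowVariation N (gzReal N g ξ) / 2 ≤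
      (∑ n ∈ range N, ∑ _k ∈ Icc 1 n, ∑ m ∈ Icc 1 (n + 1), |g m|) / 2 - ‖ξ‖ := by
  have := two_mul_norm_le ξ
  have := interRowVariation_gzReal_zero_le g ξ
  have := intraRowVariation_gzReal_eq g ξ 0
  linarith

theorem norm_mu0_mul_wWhit_gzOf_le {ℏ : ℝ} (hℏ : 0 < ℏ) :
    ‖mu0 ℏ N (gzOf N (fun j => (g j : ℂ)) ξ) * wWhit ℏ N (gzOf N (fun j => (g j : ℂ)) ξ)‖ ≤
      (∏ n ∈ range N, ∏ _k ∈ Icc 1 n, ∏ _m ∈ Icc 1 (n + 1), √ℏ * √(2 * Real.pi)) *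
        Real.exp (Real.pi / ℏ * ((∑ n ∈ range N, ∑ _k ∈ Icc 1 n, ∑ m ∈ Icc 1 (n + 1), |g m|) / 2)) *
        ‖rowVandermonde N (gzReal N g ξ) * Real.exp (-(Real.pi / ℏ * ‖ξ‖))‖ := by
  rw [gzOf_ofReal, norm_mul (rowVandermonde _ _), Real.norm_eq_abs,
    Real.norm_of_nonneg (Real.exp_nonneg _)]
  refine (norm_mu0_mul_wWhit_le N _ hℏ).trans ?_
  grw [intraRowVariation_sub_interRowVariation_gzReal_le g ξ]
  rw [mul_sub, sub_eq_add_neg, Real.exp_add]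
  exact le_of_eq (by ring)

theorem continuous_gzReal (n j : ℕ) : Continuous fun ξ : GZIdx N → ℝ => gzReal N g ξ n j := by
  unfold gzReal
  split_ifs <;> fun_prop

theorem isSubexponential_gzReal (n j : ℕ) :
    IsSubexponential fun ξ : GZIdx N → ℝ => gzReal N g ξ n j := by
  unfold gzReal
  split_ifs
  · exact .continuousLinearMap
      (ContinuousLinearMap.proj (R := ℝ) (φ := fun _ : GZIdx N => ℝ) _)
  · exact .const _

theorem isSubexponential_rowVandermonde_gzReal :
    IsSubexponential fun ξ : GZIdx N → ℝ => rowVandermonde N (gzReal N g ξ) :=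
  .prod _ fun n _ => .prod _ fun p _ => .prod _ fun s _ =>
    (isSubexponential_gzReal g n s).sub (isSubexponential_gzReal g n p)

theorem continuous_mu0_gzReal (ℏ : ℝ) :
    Continuous fun ξ : GZIdx N → ℝ => mu0 ℏ N fun n j => (gzReal N g ξ n j : ℂ) := by
  have := continuous_gzReal (N := N) g
  unfold mu0
  fun_prop

theorem continuous_wWhit_gzReal (ℏ : ℝ) :
    Continuous fun ξ : GZIdx N → ℝ => wWhit ℏ N fun n j => (gzReal N g ξ n j : ℂ) := by
  have := continuous_gzReal (N := N) g
  have gamma_continuous (n k m : ℕ) : Continuous fun ξ : GZIdx N → ℝ => Complex.Gamma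
      (1 / 2 + (((gzReal N g ξ (n + 1) m - gzReal N g ξ n k) / ℏ : ℝ) : ℂ) * Complex.I) :=
    continuous_Gamma_half_add_mul_I.comp (by fun_prop)
  simp only [wWhit, sW, hpow, gammaFactor_arg_eq]
  fun_prop

theorem mu0_mul_wWhit_isBigO_exp {ℏ : ℝ} (hℏ : 0 < ℏ) :
    (fun ξ : GZIdx N → ℝ => mu0 ℏ N (gzOf N (fun j => (g j : ℂ)) ξ) *
      wWhit ℏ N (gzOf N (fun j => (g j : ℂ)) ξ)) =O[⊤]
    fun ξ => Real.exp (-(Real.pi / (2 * ℏ) * ‖ξ‖)) := by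
  have bound : (fun ξ : GZIdx N → ℝ => mu0 ℏ N (gzOf N (fun j => (g j : ℂ)) ξ) *
      wWhit ℏ N (gzOf N (fun j => (g j : ℂ)) ξ)) =O[⊤]
      fun ξ => rowVandermonde N (gzReal N g ξ) * Real.exp (-(Real.pi / ℏ * ‖ξ‖)) :=
    isBigO_of_le' ⊤ fun ξ => norm_mu0_mul_wWhit_gzOf_le g ξ hℏ
  have half_rate_pos : 0 < Real.pi / (2 * ℏ) := by positivity
  refine bound.trans (((isSubexponential_rowVandermonde_gzReal g _ half_rate_pos).mul
    (isBigO_refl _ _)).congr_right fun ξ => ?_)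
  rw [← Real.exp_add]
  congr 1
  field_simp
  ring

theorem isSubexponential_eval_ofReal {ι : Type*} [Fintype ι] (q : MvPolynomial ι ℂ) :
    IsSubexponential fun ξ : ι → ℝ => MvPolynomial.eval (fun p => (ξ p : ℂ)) q :=
  .mvPolynomial_eval (fun p => .continuousLinearMap
    (Complex.ofRealCLM.comp (ContinuousLinearMap.proj (R := ℝ) (φ := fun _ : ι => ℝ) p))) q

theorem continuous_eval_ofReal {ι : Type*} (q : MvPolynomial ι ℂ) :
    Continuous fun ξ : ι → ℝ => MvPolynomial.eval (fun p => (ξ p : ℂ)) q :=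
  (MvPolynomial.continuous_eval q).comp (by fun_prop)

end GelfandZetlinArray

theorem pairing_integral_convergence_general (ℏ : ℝ) (hℏ : 0 < ℏ) (N : ℕ) (γtop : ℕ → ℝ)
    (f : (GZIdx N → ℝ) → ℂ) (hf : IsSubexponential f) (hfm : AEStronglyMeasurable f) :
    Integrable (fun ξ : GZIdx N → ℝ =>
      mu0 ℏ N (gzOf N (fun j => (γtop j : ℂ)) ξ) * f ξ *
        wWhit ℏ N (gzOf N (fun j => (γtop j : ℂ)) ξ)) := by
  have weight_continuous : Continuous fun ξ : GZIdx N → ℝ =>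
      mu0 ℏ N (gzOf N (fun j => (γtop j : ℂ)) ξ) *
        wWhit ℏ N (gzOf N (fun j => (γtop j : ℂ)) ξ) := by
    simp only [gzOf_ofReal]
    exact (continuous_mu0_gzReal γtop ℏ).mul (continuous_wWhit_gzReal γtop ℏ)
  have product_integrable := hf.integrable_mul_of_isBigO_exp (by positivity)
    (mu0_mul_wWhit_isBigO_exp γtop hℏ) hfm weight_continuous.aestronglyMeasurable
  exact product_integrable.congr (.of_forall fun ξ => by ring)

/-- absolute convergence of the pairing integral
`⟨q_1, q_2 w_N⟩ = ∫ μ_0(γ)·conj(q_1(γ))·q_2(γ)·w_N(γ) dγ` for polynomials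
`q_1, q_2` in the Gelfand–Zetlin variables, with real top row `γ_{N·}`. -/
theorem pairing_integral_convergence (ℏ : ℝ) (hℏ : 0 < ℏ) (N : ℕ) (hN : 2 ≤ N)
    (γtop : ℕ → ℝ) (q₁ q₂ : MvPolynomial (GZIdx N) ℂ) :
    Integrable (fun ξ : GZIdx N → ℝ =>
      mu0 ℏ N (gzOf N (fun j => (γtop j : ℂ)) ξ) *
        (starRingEnd ℂ) (MvPolynomial.eval (fun p => ((ξ p : ℝ) : ℂ)) q₁) *
        MvPolynomial.eval (fun p => ((ξ p : ℝ) : ℂ)) q₂ *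
        wWhit ℏ N (gzOf N (fun j => (γtop j : ℂ)) ξ)) := by
  simpa only [mul_assoc] using pairing_integral_convergence_general ℏ hℏ N γtop _
    ((isSubexponential_eval_ofReal q₁).conj.mul (isSubexponential_eval_ofReal q₂))
    (((continuous_eval_ofReal q₁).star.mul (continuous_eval_ofReal q₂)).aestronglyMeasurable)
end
end

section
/- Fix ℏ > 0 and n ≥ 1. For every function f, all λ, μ ∈ ℂ, and every point γ at which γ_{n1},…,γ_{nn} are pairwise distinct, the following Yangian-type relations hold pointwise: (λ − μ + iℏ)·(𝒜_n(λ)(ℬ_n(μ)f))(γ) = (λ − μ)·(ℬ_n(μ)(𝒜_n(λ)f))(γ) + iℏ·(𝒜_n(μ)(ℬ_n(λ)f))(γ), and (λ − μ + iℏ)·(𝒜_n(μ)(𝒞_n(λ)f))(γ) = (λ − μ)·(𝒞_n(λ)(𝒜_n(μ)f))(γ) + iℏ·(𝒜_n(λ)(𝒞_n(μ)f))(γ). -/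
open Finset

noncomputable section

/-- The row of Gelfand–Zetlin variables `γ_n = (γ_{n1}, …, γ_{nn})` (indexed by `ℕ`,
relevant for indices `1, …, n`). -/
abbrev Row := ℕ → ℂ

/-- Shift of the single variable `γ_{nj}` by `c`. -/
def rowShift (c : ℂ) (j : ℕ) (g : Row) : Row := fun k => if k = j then g k + c else g k

/-- The operator `𝒜_n(λ)`: multiplication by `∏_{j=1}^{n}(λ − γ_{nj})`. -/
def Aop (n : ℕ) (lam : ℂ) (f : Row → ℂ) (g : Row) : ℂ :=
  (∏ j ∈ Icc 1 n, (lam - g j)) * f g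

/-- The operator `ℬ_n(λ)`, with fixed parameters `t = γ_{n+1}`. -/
def Bop (ℏ : ℝ) (n : ℕ) (t : Row) (lam : ℂ) (f : Row → ℂ) (g : Row) : ℂ :=
  ∑ j ∈ Icc 1 n,
    (∏ s ∈ (Icc 1 n).erase j, (lam - g s) / (g j - g s)) *
      (∏ r ∈ Icc 1 (n + 1), (g j - t r - Complex.I * ℏ / 2)) *
      f (rowShift (-(Complex.I * ℏ)) j g)

/-- The operator `𝒞_n(λ)`, with fixed parameters `u = γ_{n−1}`. -/
def Cop (ℏ : ℝ) (n : ℕ) (u : Row) (lam : ℂ) (f : Row → ℂ) (g : Row) : ℂ :=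
  -∑ j ∈ Icc 1 n,
    (∏ s ∈ (Icc 1 n).erase j, (lam - g s) / (g j - g s)) *
      (∏ r ∈ Icc 1 (n - 1), (g j - u r + Complex.I * ℏ / 2)) *
      f (rowShift (Complex.I * ℏ) j g)

/-!
Both relations hold term by term in `j`. With `N` the nodal polynomial `∏ₛ (X − γₛ)` and `P` the
same product without `γⱼ`, the Lagrange basis polynomial `ℓⱼ` is a constant multiple of `P`, and
shifting `γⱼ` by `c` turns `N = (X − γⱼ) P` into `(X − γⱼ − c) P`. Each relation therefore carries
the common factor `P(x) P(y)`, next to which stands the scalar identity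
`(x − y − c)(x − γⱼ) = (x − y)(x − γⱼ − c) − c (y − γⱼ)`.
The `ℬ` relation is the case `(x, y, c) = (λ, μ, −iℏ)`, and the negated `𝒞` relation is the case
`(x, y, c) = (μ, λ, iℏ)`.
-/

section Lagrange

open Polynomial Lagrange

variable {ι : Type*} [DecidableEq ι]

lemma nodal_update {R : Type*} [CommRing R] {s : Finset ι} {j : ι} (hj : j ∈ s) (v : ι → R)
    (a : R) : nodal s (Function.update v j a) = (X - C a) * nodal (s.erase j) v := by
  have nodal_erase_update : nodal (s.erase j) (Function.update v j a) = nodal (s.erase j) v :=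
    prod_congr rfl fun k hk => by rw [Function.update_of_ne (ne_of_mem_erase hk)]
  rw [nodal_eq_mul_nodal_erase hj, Function.update_self, nodal_erase_update]

variable {F : Type*} [Field F]

lemma basis_eq_nodalWeight_mul_nodal_erase {s : Finset ι} {j : ι} (hj : j ∈ s) (v : ι → F) :
    Lagrange.basis s v j = C (nodalWeight s v j) * nodal (s.erase j) v := by
  rw [basis_eq_prod_sub_inv_mul_nodal_div hj, nodal_erase_eq_nodal_div hj]

lemma eval_basis_eq_prod_div (s : Finset ι) (v : ι → F) (j : ι) (x : F) :
    (Lagrange.basis s v j).eval x = ∏ k ∈ s.erase j, (x - v k) / (v j - v k) := by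
  simp only [Lagrange.basis, basisDivisor, eval_prod, eval_mul, eval_C, eval_sub, eval_X,
    div_eq_inv_mul]

lemma eval_nodal_mul_eval_basis_exchange {s : Finset ι} {j : ι} (hj : j ∈ s) (v : ι → F)
    (c x y : F) :
    (x - y - c) * ((nodal s v).eval x * (Lagrange.basis s v j).eval y) =
      (x - y) * ((Lagrange.basis s v j).eval y *
        (nodal s (Function.update v j (v j + c))).eval x) -
        c * ((nodal s v).eval y * (Lagrange.basis s v j).eval x) := by
  rw [nodal_update hj, nodal_eq_mul_nodal_erase hj, basis_eq_nodalWeight_mul_nodal_erase hj]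
  simp only [eval_mul, eval_sub, eval_X, eval_C]
  ring

/-- Multiplication of functions of the nodes `v` by the value at `x` of their nodal polynomial.
This is the shape of `𝒜_n(x)`. -/
def nodalMul (s : Finset ι) (x : F) (f : (ι → F) → F) (v : ι → F) : F :=
  (nodal s v).eval x * f v

/-- The difference operator shifting one node at a time by `c`, where the shift of the node `j`
has the coefficient `ℓⱼ(x) w j v`, with `ℓⱼ` the Lagrange basis polynomial of the nodes `v` and
`w` an arbitrary weight. This is the common shape of `ℬ_n(x)` and `𝒞_n(x)`. -/
def lagrangeShift (s : Finset ι) (w : ι → (ι → F) → F) (c x : F) (f : (ι → F) → F)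
    (v : ι → F) : F :=
  ∑ j ∈ s, (Lagrange.basis s v j).eval x * w j v * f (Function.update v j (v j + c))

theorem nodalMul_lagrangeShift_exchange (s : Finset ι) (w : ι → (ι → F) → F) (c x y : F)
    (f : (ι → F) → F) (v : ι → F) :
    (x - y - c) * nodalMul s x (lagrangeShift s w c y f) v =
      (x - y) * lagrangeShift s w c y (nodalMul s x f) v -
        c * nodalMul s y (lagrangeShift s w c x f) v := by
  simp only [nodalMul, lagrangeShift, mul_sum, ← sum_sub_distrib]
  refine sum_congr rfl fun j hj => ?_
  linear_combination
    w j v * f (Function.update v j (v j + c)) * eval_nodal_mul_eval_basis_exchange hj v c x y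

end Lagrange

lemma rowShift_eq_update (c : ℂ) (j : ℕ) (g : Row) :
    rowShift c j g = Function.update g j (g j + c) := by
  ext k
  by_cases hk : k = j
  · subst hk
    simp [rowShift]
  · simp [rowShift, hk]

lemma Aop_eq_nodalMul (n : ℕ) (lam : ℂ) : Aop n lam = nodalMul (Icc 1 n) lam := by
  ext f g
  rw [Aop, nodalMul, Lagrange.eval_nodal]

lemma Bop_eq_lagrangeShift (ℏ : ℝ) (n : ℕ) (t : Row) (lam : ℂ) :
    Bop ℏ n t lam =
      lagrangeShift (Icc 1 n)
        (fun j g => ∏ r ∈ Icc 1 (n + 1), (g j - t r - Complex.I * ℏ / 2))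
        (-(Complex.I * ℏ)) lam := by
  ext f g
  simp only [Bop, lagrangeShift, eval_basis_eq_prod_div, rowShift_eq_update]

lemma Cop_eq_lagrangeShift (ℏ : ℝ) (n : ℕ) (u : Row) (lam : ℂ) :
    Cop ℏ n u lam =
      lagrangeShift (Icc 1 n)
        (fun j g => -∏ r ∈ Icc 1 (n - 1), (g j - u r + Complex.I * ℏ / 2))
        (Complex.I * ℏ) lam := by
  ext f g
  simp only [Cop, lagrangeShift, eval_basis_eq_prod_div, rowShift_eq_update, mul_neg, neg_mul,
    sum_neg_distrib]

/-- the Yangian-type exchange relations between `𝒜_n` and `ℬ_n`, `𝒞_n`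
hold pointwise at every point with pairwise distinct `γ_{n1}, …, γ_{nn}`. -/
theorem yangian_AB_AC_relations (ℏ : ℝ) (hℏ : 0 < ℏ) (n : ℕ) (hn : 1 ≤ n)
    (t u : Row) (f : Row → ℂ) (lam mu : ℂ) (g : Row)
    (hg : ∀ j ∈ Icc 1 n, ∀ s ∈ Icc 1 n, j ≠ s → g j ≠ g s) :
    (lam - mu + Complex.I * ℏ) * Aop n lam (Bop ℏ n t mu f) g =
        (lam - mu) * Bop ℏ n t mu (Aop n lam f) g +
          Complex.I * ℏ * Aop n mu (Bop ℏ n t lam f) g ∧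
    (lam - mu + Complex.I * ℏ) * Aop n mu (Cop ℏ n u lam f) g =
        (lam - mu) * Cop ℏ n u lam (Aop n mu f) g +
          Complex.I * ℏ * Aop n lam (Cop ℏ n u mu f) g := by
  simp only [Aop_eq_nodalMul, Bop_eq_lagrangeShift, Cop_eq_lagrangeShift]
  constructor
  · linear_combination nodalMul_lagrangeShift_exchange (Icc 1 n) _ (-(Complex.I * ℏ)) lam mu f g
  · linear_combination -nodalMul_lagrangeShift_exchange (Icc 1 n) _ (Complex.I * ℏ) mu lam f g
end
end

section
/- Fix ℏ > 0 and n ≥ 1. For every function f, all λ, μ ∈ ℂ, and every point γ such that for all 1 ≤ j < s ≤ n the difference γ_{nj} − γ_{ns} does not belong to {0, iℏ, −iℏ}, the operators ℬ_n and 𝒞_n commute pointwise: (ℬ_n(λ)(ℬ_n(μ)f))(γ) = (ℬ_n(μ)(ℬ_n(λ)f))(γ) and (𝒞_n(λ)(𝒞_n(μ)f))(γ) = (𝒞_n(μ)(𝒞_n(λ)f))(γ). -/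
open Finset

noncomputable section

/-!
Each of `ℬ_n(λ)f` and `𝒞_n(λ)f` at `γ` is the Lagrange polynomial in `λ` with nodes `γ_j` and
values `w(γ_j) f(γ + c e_j)`. The entries of each shifted row `γ + c e_j` are still distinct, so the
double application with parameters `λ`, `μ` is a polynomial of degree `< n` in each of them, hence
determined by its values at the pairs `(λ, μ) = (γ_j, γ_k)`. For `j ≠ k` the value is
`w(γ_j) w(γ_k) f(γ + c e_j + c e_k)`, as `γ_k` is still a node after shifting `γ_j`. This is
symmetric in `j` and `k`, and for `j = k` there is nothing to compare, so the polynomial is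
symmetric in `λ` and `μ`.
-/

section InterpolationShift

variable {ι K : Type*} [DecidableEq ι] [Field K]

lemma eval_lagrangeBasis (I : Finset ι) (g : ι → K) (j : ι) (x : K) :
    (Lagrange.basis I g j).eval x = ∏ s ∈ I.erase j, (x - g s) / (g j - g s) := by
  simp [Lagrange.basis, Lagrange.basisDivisor, Polynomial.eval_prod, div_eq_inv_mul]

lemma eval_eq_sum_eval_mul_basis {I : Finset ι} {v : ι → K} {p : Polynomial K}
    (hv : Set.InjOn v I) (hp : p.degree < #I) (x : K) :
    p.eval x = ∑ k ∈ I, p.eval (v k) * (Lagrange.basis I v k).eval x := by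
  conv_lhs => rw [Lagrange.eq_interpolate hv hp]
  simp [Lagrange.interpolate_apply, Polynomial.eval_finsetSum]

/-- The value at `x` of the Lagrange polynomial through the points
`(g j, w (g j) * f (g + c e_j))`, `j ∈ I`. With `x` fixed it is a difference operator in `f`; both
`ℬ_n(λ)` and `𝒞_n(λ)` have this form, with `c = ∓iℏ` and `x = λ`. -/
def interpolationShift (I : Finset ι) (c : K) (w : K → K) (x : K) (f : (ι → K) → K)
    (g : ι → K) : K :=
  (Lagrange.interpolate I g fun j => w (g j) * f (g + Pi.single j c)).eval x

lemma interpolationShift_eq_sum_basis (I : Finset ι) (c : K) (w : K → K) (x : K)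
    (f : (ι → K) → K) (g : ι → K) :
    interpolationShift I c w x f g =
      ∑ j ∈ I, w (g j) * f (g + Pi.single j c) * (Lagrange.basis I g j).eval x := by
  simp [interpolationShift, Lagrange.interpolate_apply, Polynomial.eval_finsetSum]

lemma interpolationShift_eq_sum_prod (I : Finset ι) (c : K) (w : K → K) (x : K)
    (f : (ι → K) → K) (g : ι → K) :
    interpolationShift I c w x f g =
      ∑ j ∈ I, (∏ s ∈ I.erase j, (x - g s) / (g j - g s)) * w (g j) *
        f (g + Pi.single j c) := by
  simp only [interpolationShift_eq_sum_basis, eval_lagrangeBasis]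
  exact sum_congr rfl fun _ _ => by ring

variable {I : Finset ι} {c : K} {g : ι → K}

lemma interpolationShift_node (w : K → K) (f : (ι → K) → K) (hg : Set.InjOn g I) {k : ι}
    (hk : k ∈ I) :
    interpolationShift I c w (g k) f g = w (g k) * f (g + Pi.single k c) :=
  Lagrange.eval_interpolate_at_node _ hg hk

lemma interpolationShift_add_single_node (w : K → K) (f : (ι → K) → K) {j k : ι} (hk : k ∈ I)
    (hkj : k ≠ j) (hgj : Set.InjOn (g + Pi.single j c) I) :
    interpolationShift I c w (g k) f (g + Pi.single j c) =
      w (g k) * f (g + Pi.single j c + Pi.single k c) := by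
  have node_eq : (g + Pi.single j c : ι → K) k = g k := by simp [hkj]
  simpa only [node_eq] using interpolationShift_node (c := c) w f hgj hk

lemma interpolationShift_eq_sum_nodes (w : K → K) (f : (ι → K) → K) (x : K) {v : ι → K}
    (hv : Set.InjOn v I) (hg : Set.InjOn g I) :
    interpolationShift I c w x f g =
      ∑ k ∈ I, interpolationShift I c w (v k) f g * (Lagrange.basis I v k).eval x :=
  eval_eq_sum_eval_mul_basis hv (Lagrange.degree_interpolate_lt _ hg) x

lemma interpolationShift_comp_eq_sum_nodes (w : K → K) (f : (ι → K) → K) (x y : K)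
    (hg : Set.InjOn g I) (hgc : ∀ j ∈ I, Set.InjOn (g + Pi.single j c) I) :
    interpolationShift I c w x (interpolationShift I c w y f) g =
      ∑ j ∈ I, ∑ k ∈ I, w (g j) * interpolationShift I c w (g k) f (g + Pi.single j c) *
        ((Lagrange.basis I g j).eval x * (Lagrange.basis I g k).eval y) := by
  rw [interpolationShift_eq_sum_basis]
  refine sum_congr rfl fun j hj => ?_
  rw [interpolationShift_eq_sum_nodes w f y hg (hgc j hj), mul_sum, sum_mul]
  exact sum_congr rfl fun _ _ => by ring

lemma mul_interpolationShift_node_symm (w : K → K) (f : (ι → K) → K)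
    (hgc : ∀ j ∈ I, Set.InjOn (g + Pi.single j c) I) {j k : ι} (hj : j ∈ I) (hk : k ∈ I) :
    w (g j) * interpolationShift I c w (g k) f (g + Pi.single j c) =
      w (g k) * interpolationShift I c w (g j) f (g + Pi.single k c) := by
  obtain rfl | hjk := eq_or_ne j k
  · rfl
  · rw [interpolationShift_add_single_node w f hk hjk.symm (hgc j hj),
      interpolationShift_add_single_node w f hj hjk (hgc k hk), add_right_comm, mul_left_comm]

theorem interpolationShift_comm (w : K → K) (f : (ι → K) → K) (x y : K)
    (hg : Set.InjOn g I) (hgc : ∀ j ∈ I, Set.InjOn (g + Pi.single j c) I) :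
    interpolationShift I c w x (interpolationShift I c w y f) g =
      interpolationShift I c w y (interpolationShift I c w x f) g := by
  rw [interpolationShift_comp_eq_sum_nodes w f x y hg hgc,
    interpolationShift_comp_eq_sum_nodes w f y x hg hgc, sum_comm]
  refine sum_congr rfl fun k hk => sum_congr rfl fun j hj => ?_
  rw [mul_interpolationShift_node_symm w f hgc hj hk, mul_comm (Polynomial.eval x _)]

end InterpolationShift

lemma injOn_add_single {ι M : Type*} [DecidableEq ι] [AddZeroClass M] {S : Set ι} {g : ι → M}
    {c : M} {j : ι} (hg : Set.InjOn g S) (hj : ∀ s ∈ S, s ≠ j → g s ≠ g j + c) :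
    Set.InjOn (g + Pi.single j c) S := by
  intro a ha b hb hab
  by_cases haj : a = j <;> by_cases hbj : b = j
  · rw [haj, hbj]
  · subst haj
    exact absurd (by simpa [hbj] using hab.symm) (hj b hb hbj)
  · subst hbj
    exact absurd (by simpa [haj] using hab) (hj a ha haj)
  · exact hg ha hb (by simpa [haj, hbj] using hab)

lemma rowShift_eq_add_single (c : ℂ) (j : ℕ) (g : Row) :
    rowShift c j g = g + Pi.single j c := by
  ext k
  by_cases hk : k = j <;> simp [rowShift, hk]

lemma Bop_eq_interpolationShift (ℏ : ℝ) (n : ℕ) (t : Row) :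
    Bop ℏ n t = interpolationShift (Icc 1 n) (-(Complex.I * ℏ))
      fun z => ∏ r ∈ Icc 1 (n + 1), (z - t r - Complex.I * ℏ / 2) := by
  ext x f g
  simp only [Bop, rowShift_eq_add_single, interpolationShift_eq_sum_prod]

lemma Cop_eq_interpolationShift (ℏ : ℝ) (n : ℕ) (u : Row) :
    Cop ℏ n u = interpolationShift (Icc 1 n) (Complex.I * ℏ)
      fun z => -∏ r ∈ Icc 1 (n - 1), (z - u r + Complex.I * ℏ / 2) := by
  ext x f g
  simp only [Cop, rowShift_eq_add_single, interpolationShift_eq_sum_prod, mul_neg, neg_mul,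
    sum_neg_distrib]

/-- the operators `ℬ_n(λ)` commute among themselves, and likewise the
`𝒞_n(λ)`, pointwise at every point where all same-level differences avoid
`{0, iℏ, −iℏ}`. -/
theorem B_comm_and_C_comm (ℏ : ℝ) (hℏ : 0 < ℏ) (n : ℕ) (hn : 1 ≤ n)
    (t u : Row) (f : Row → ℂ) (lam mu : ℂ) (g : Row)
    (hg : ∀ j ∈ Icc 1 n, ∀ s ∈ Icc 1 n, j < s →
      g j - g s ≠ 0 ∧ g j - g s ≠ Complex.I * ℏ ∧ g j - g s ≠ -(Complex.I * ℏ)) :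
    Bop ℏ n t lam (Bop ℏ n t mu f) g = Bop ℏ n t mu (Bop ℏ n t lam f) g ∧
    Cop ℏ n u lam (Cop ℏ n u mu f) g = Cop ℏ n u mu (Cop ℏ n u lam f) g := by
  have separated : ∀ j ∈ Icc 1 n, ∀ s ∈ Icc 1 n, s ≠ j →
      g s ≠ g j ∧ g s ≠ g j + -(Complex.I * ℏ) ∧ g s ≠ g j + Complex.I * ℏ := by
    intro j hj s hs hsj
    rcases hsj.lt_or_gt with h | h
    · grind [hg s hs j hj h]
    · grind [hg j hj s hs h]
  have hinj : Set.InjOn g (Icc 1 n) := fun j hj s hs hjs =>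
    by_contra fun hne => (separated s hs j hj hne).1 hjs
  rw [Bop_eq_interpolationShift, Cop_eq_interpolationShift]
  exact ⟨interpolationShift_comm _ f lam mu hinj fun j hj =>
      injOn_add_single hinj fun s hs hsj => (separated j hj s hs hsj).2.1,
    interpolationShift_comm _ f lam mu hinj fun j hj =>
      injOn_add_single hinj fun s hs hsj => (separated j hj s hs hsj).2.2⟩
end
end
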